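/- arXiv:1802.04052 — 4 statements merged into one kernel-verified Lean document; each statement's English description precedes it below -/
import Mathlib

section
/- Let λ ∈ ℂ and t ≥ 0. For every integer n ≥ 1 there exists a bounded linear operator L_{λ,n}(t) on X such that for every x ∈ X, L_{λ,n}(t)x ∈ D(A) and (λ − A)L_{λ,n}(t)x + e^{−nλt}·(D_λ(t))^n x = (φ_λ(t))^n·x; moreover L_{λ,n}(t) commutes with D_λ(t), and for every x ∈ D(A), (λ − A)L_{λ,n}(t)x = L_{λ,n}(t)(λ − A)x. -/
/-!
Write `E(t) = e^{-λt} D_λ(t) = ∫₀ᵗ e^{-λr} S(r) dr` and `L(t) = ∫₀ᵗ E(s) ds`. For `n = 1` the claim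
reads `(λ − A) L(t) + E(t) = φ_λ(t)`. With the resolvent `R = (μ − A)⁻¹`, membership in `D(A)`
together with an equation `(λ − A) y = z` is equivalent to `y = R ((μ − λ) y + z)`, which involves
bounded operators only. In this form the case `n = 1` follows by comparing derivatives
(`first_resolvent_identity`) and integrating once more (`second_resolvent_identity`).

For general `n`, factor `φⁿ − E(t)ⁿ = (φ − E(t)) P` with `P = ∑_{i<n} φⁱ E(t)^{n−1−i}` and take
`L_{λ,n}(t) = L(t) P`. All operators involved commute with each other and with `R`, because `S` does.
-/

open MeasureTheory intervalIntegral Pointwise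

noncomputable section

/-- `D_λ(t) x = ∫₀ᵗ e^{λ(t−r)} S(r) x dr`. -/
noncomputable def Dop {X : Type*} [NormedAddCommGroup X] [NormedSpace ℂ X]
    (S : ℝ → X →L[ℂ] X) (l : ℂ) (t : ℝ) (x : X) : X :=
  ∫ r in (0:ℝ)..t, Complex.exp (l * ((t - r : ℝ) : ℂ)) • S r x

/-- `c_λ(t) = ∫₀ᵗ e^{λ(t−s)} s^{α−1}/Γ(α) ds`. -/
noncomputable def cConst (α : ℝ) (l : ℂ) (t : ℝ) : ℂ :=
  ∫ s in (0:ℝ)..t,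
    Complex.exp (l * ((t - s : ℝ) : ℂ)) * ((s ^ (α - 1) : ℝ) : ℂ) / ((Real.Gamma α : ℝ) : ℂ)

/-- `L_λ(t) x = ∫₀ᵗ e^{−λs} D_λ(s) x ds`. -/
noncomputable def Lop {X : Type*} [NormedAddCommGroup X] [NormedSpace ℂ X]
    (S : ℝ → X →L[ℂ] X) (l : ℂ) (t : ℝ) (x : X) : X :=
  ∫ s in (0:ℝ)..t, Complex.exp (-l * ((s : ℝ) : ℂ)) • Dop S l s x

/-- `φ_λ(t) = ∫₀ᵗ ∫₀^τ e^{−λr} r^{α−1}/Γ(α) dr dτ`. -/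
noncomputable def phiConst (α : ℝ) (l : ℂ) (t : ℝ) : ℂ :=
  ∫ τ in (0:ℝ)..t, ∫ r in (0:ℝ)..τ,
    Complex.exp (-l * ((r : ℝ) : ℂ)) * ((r ^ (α - 1) : ℝ) : ℂ) / ((Real.Gamma α : ℝ) : ℂ)

/-- Iterated domain `D(A^n)` of the (possibly unbounded) operator given by the map `f = λ − A`
with domain `D`: `D^0 = X`, `D^{n+1} = {x ∈ D | f x ∈ D^n}`. -/
def iterDom {X : Type*} (D : Set X) (f : X → X) : ℕ → Set X
  | 0 => Set.univ
  | n + 1 => {x | x ∈ D ∧ f x ∈ iterDom D f n}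

/-- The bounded operator `c_λ(t)·I − S(t)`. -/
noncomputable def cSop {X : Type*} [NormedAddCommGroup X] [NormedSpace ℂ X]
    (S : ℝ → X →L[ℂ] X) (α : ℝ) (l : ℂ) (t : ℝ) : X →L[ℂ] X :=
  cConst α l t • ContinuousLinearMap.id ℂ X - S t

/-- `D_{λ,n}(t) = Σ_{i=1}^n binom(n,i)·(φ_λ(t))^{n−i}·e^{−iλt}·(−D_λ(t))^{i−1}`. -/
noncomputable def Dln {X : Type*} [NormedAddCommGroup X] [NormedSpace ℂ X]
    (S : ℝ → X →L[ℂ] X) (α : ℝ) (l : ℂ) (t : ℝ) (n : ℕ) (x : X) : X :=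
  ∑ i ∈ Finset.Icc 1 n,
    ((n.choose i : ℂ) * (phiConst α l t) ^ (n - i) * Complex.exp (-(i : ℂ) * l * (t : ℂ))) •
      ((fun y => - Dop S l t y)^[i - 1] x)

/-- The strong integral `x ↦ ∫₀ᵗ F(r) x dr` of a strongly continuous family is a bounded operator;
boundedness comes from the uniform boundedness principle on the compact interval. -/
lemma exists_strong_integral {X : Type*} [NormedAddCommGroup X] [NormedSpace ℂ X] [CompleteSpace X]
    (F : ℝ → X →L[ℂ] X) (hF : ∀ x, Continuous fun r => F r x) :
    ∃ G : ℝ → X →L[ℂ] X, ∀ t x, G t x = ∫ r in (0:ℝ)..t, F r x := by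
  have key : ∀ t : ℝ, ∃ G : X →L[ℂ] X, ∀ x, G x = ∫ r in (0:ℝ)..t, F r x := by
    intro t
    obtain ⟨C, hC⟩ : ∃ C, ∀ i : Set.uIcc (0:ℝ) t, ‖F i‖ ≤ C := by
      refine banach_steinhaus (g := fun i : Set.uIcc (0:ℝ) t => F i) fun x => ?_
      obtain ⟨C, hC⟩ := isCompact_uIcc.exists_bound_of_continuousOn (s := Set.uIcc (0:ℝ) t)
        (hF x).continuousOn
      exact ⟨C, fun i => hC i i.2⟩
    refine ⟨LinearMap.mkContinuous
      { toFun := fun x => ∫ r in (0:ℝ)..t, F r x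
        map_add' := fun x y => ?_
        map_smul' := fun c x => ?_ } (C * |t - 0|) fun x => ?_, fun x => rfl⟩
    · simp only [map_add]
      exact integral_add ((hF x).intervalIntegrable _ _) ((hF y).intervalIntegrable _ _)
    · simp only [map_smul, RingHom.id_apply]
      exact intervalIntegral.integral_smul _ _
    · have := norm_integral_le_of_norm_le_const (a := (0:ℝ)) (b := t) (f := fun r => F r x)
        (C := C * ‖x‖) fun r hr =>
          (F r).le_of_opNorm_le (hC ⟨r, Set.uIoc_subset_uIcc hr⟩) x
      calc _ ≤ C * ‖x‖ * |t - 0| := this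
        _ = _ := by ring
  choose G hG using key
  exact ⟨G, hG⟩

lemma commute_strong_integral {X : Type*} [NormedAddCommGroup X] [NormedSpace ℂ X]
    [CompleteSpace X] {F G : ℝ → X →L[ℂ] X} (hF : ∀ x, Continuous fun r => F r x)
    (hG : ∀ t x, G t x = ∫ r in (0:ℝ)..t, F r x) {C : X →L[ℂ] X} (hC : ∀ r, Commute C (F r))
    (t : ℝ) : Commute C (G t) := by
  ext x
  change C (G t x) = G t (C x)
  rw [hG, hG, ← ContinuousLinearMap.intervalIntegral_comp_comm C ((hF x).intervalIntegrable _ _)]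
  exact integral_congr fun r _ => DFunLike.congr_fun (hC r) x

lemma hasDerivAt_strong_integral {X : Type*} [NormedAddCommGroup X] [NormedSpace ℂ X]
    [CompleteSpace X] {F G : ℝ → X →L[ℂ] X} (hF : ∀ x, Continuous fun r => F r x)
    (hG : ∀ t x, G t x = ∫ r in (0:ℝ)..t, F r x) (x : X) (t : ℝ) :
    HasDerivAt (fun s => G s x) (F t x) t := by
  simp only [hG]
  exact integral_hasDerivAt_right ((hF x).intervalIntegrable _ _)
    ((hF x).stronglyMeasurableAtFilter _ _) (hF x).continuousAt

/-- `ψ_λ(t) = ∫₀ᵗ e^{−λr} r^{α−1}/Γ(α) dr`, so that `φ_λ` is the primitive of `ψ_λ`. -/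
def psi (α : ℝ) (l : ℂ) (t : ℝ) : ℂ :=
  ∫ r in (0:ℝ)..t,
    Complex.exp (-l * ((r : ℝ) : ℂ)) * ((r ^ (α - 1) : ℝ) : ℂ) / ((Real.Gamma α : ℝ) : ℂ)

lemma psi_integrable {α : ℝ} (hα : 0 < α) (l : ℂ) (a b : ℝ) :
    IntervalIntegrable (fun r : ℝ => Complex.exp (-l * ((r : ℝ) : ℂ)) *
      ((r ^ (α - 1) : ℝ) : ℂ) / ((Real.Gamma α : ℝ) : ℂ)) volume a b := by
  have h : IntervalIntegrable (fun r : ℝ => ((r ^ (α - 1) : ℝ) : ℂ)) volume a b :=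
    have h0 : IntervalIntegrable (fun r : ℝ => r ^ (α - 1)) volume a b :=
      intervalIntegrable_rpow' (by linarith)
    ⟨h0.1.ofReal, h0.2.ofReal⟩
  exact (h.continuousOn_mul (by fun_prop)).div_const _

lemma psi_continuous {α : ℝ} (hα : 0 < α) (l : ℂ) : Continuous (psi α l) :=
  continuous_primitive (fun a b => psi_integrable hα l a b) 0

lemma psi_hasDerivAt {α : ℝ} (hα : 0 < α) (l : ℂ) {t : ℝ} (ht : 0 < t) :
    HasDerivAt (psi α l) (Complex.exp (-l * (t : ℂ)) *
      ((t ^ (α - 1) : ℝ) : ℂ) / ((Real.Gamma α : ℝ) : ℂ)) t := by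
  have hc : ContinuousOn (fun r : ℝ => Complex.exp (-l * ((r : ℝ) : ℂ)) *
      ((r ^ (α - 1) : ℝ) : ℂ) / ((Real.Gamma α : ℝ) : ℂ)) (Set.Ioi 0) := by
    refine ContinuousOn.div_const (ContinuousOn.mul (by fun_prop) ?_) _
    refine Complex.continuous_ofReal.comp_continuousOn ?_
    exact continuousOn_id.rpow_const fun r hr => Or.inl (ne_of_gt hr)
  exact integral_hasDerivAt_right (psi_integrable hα l 0 t)
    (hc.stronglyMeasurableAtFilter isOpen_Ioi t ht) (hc.continuousAt (Ioi_mem_nhds ht))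

/-- The kernel `t^α/Γ(α+1)` has derivative `t^{α−1}/Γ(α)` for `t > 0`. -/
lemma kernel_hasDerivAt {α : ℝ} (hα : 0 < α) {t : ℝ} (ht : 0 < t) :
    HasDerivAt (fun u : ℝ => ((u ^ α : ℝ) : ℂ) / ((Real.Gamma (α + 1) : ℝ) : ℂ))
      (((t ^ (α - 1) : ℝ) : ℂ) / ((Real.Gamma α : ℝ) : ℂ)) t := by
  have h := ((Real.hasDerivAt_rpow_const (x := t) (p := α) (Or.inl ht.ne')).ofReal_comp).div_const
    ((Real.Gamma (α + 1) : ℝ) : ℂ)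
  refine h.congr_deriv ?_
  have h1 : (α : ℂ) ≠ 0 := by exact_mod_cast hα.ne'
  have h2 : ((Real.Gamma α : ℝ) : ℂ) ≠ 0 := by exact_mod_cast (Real.Gamma_pos_of_pos hα).ne'
  rw [Real.Gamma_add_one hα.ne']
  push_cast
  field_simp

/-- The equation `(λ − A) E(t) x = ψ(t) x − e^{−λt} T(t) x`, `E(t) x = ∫₀ᵗ e^{−λr} T(r) x dr`,
written through the resolvent `R = (μ − A)⁻¹`. The hypothesis `hR` is the defining equation of
the integrated semigroup in the same form. Both sides vanish at `0` and have equal derivatives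
on `(0, ∞)`. -/
lemma first_resolvent_identity {X : Type*} [NormedAddCommGroup X] [NormedSpace ℂ X]
    [CompleteSpace X] {α : ℝ} (hα : 0 < α) {T J E : ℝ → X →L[ℂ] X} {R : X →L[ℂ] X} {l μ : ℂ}
    (hT : ∀ x, Continuous fun r => T r x)
    (hJ : ∀ t x, J t x = ∫ r in (0:ℝ)..t, T r x)
    (hE : ∀ t x, E t x = ∫ r in (0:ℝ)..t, (Complex.exp (-l * (r : ℂ)) • T r) x)
    (hR : ∀ t, 0 ≤ t → ∀ x, R (T t x) = μ • R (J t x) +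
      (((t ^ α : ℝ) : ℂ) / ((Real.Gamma (α + 1) : ℝ) : ℂ)) • R x - J t x)
    {t : ℝ} (ht : 0 ≤ t) (x : X) :
    E t x = R ((μ - l) • E t x - Complex.exp (-l * (t : ℂ)) • T t x + psi α l t • x) := by
  have heT : ∀ x, Continuous fun r : ℝ => (Complex.exp (-l * (r : ℂ)) • T r) x := fun x =>
    (by fun_prop : Continuous fun r : ℝ => Complex.exp (-l * (r : ℂ))).smul (hT x)
  have hJ' := hasDerivAt_strong_integral hT hJ x
  have hE' := hasDerivAt_strong_integral heT hE x
  set f : ℝ → X := fun s => (μ - l) • R (E s x) - Complex.exp (-l * (s : ℂ)) • (μ • R (J s x) +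
      (((s ^ α : ℝ) : ℂ) / ((Real.Gamma (α + 1) : ℝ) : ℂ)) • R x - J s x) + psi α l s • R x
      - E s x with hf
  have hcJ : Continuous fun s => J s x := continuous_iff_continuousAt.2 fun s => (hJ' s).continuousAt
  have hcE : Continuous fun s => E s x := continuous_iff_continuousAt.2 fun s => (hE' s).continuousAt
  have hcp := psi_continuous hα l
  have hcg : Continuous fun s : ℝ => ((s ^ α : ℝ) : ℂ) :=
    Complex.continuous_ofReal.comp (Real.continuous_rpow_const hα.le)
  have hfc : Continuous f := by fun_prop
  have hexp : ∀ s : ℝ, HasDerivAt (fun s : ℝ => Complex.exp (-l * (s : ℂ)))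
      (Complex.exp (-l * (s : ℂ)) * (-l)) s := fun s => by
    have := ((Complex.ofRealCLM.hasDerivAt (x := s)).const_mul (-l)).cexp
    simpa using this
  have hfd : ∀ s ∈ Set.Ioo 0 t, HasDerivAt f 0 s := by
    intro s hs
    have dRE := (R.restrictScalars ℝ).hasFDerivAt.comp_hasDerivAt s (hE' s)
    have dRJ := (R.restrictScalars ℝ).hasFDerivAt.comp_hasDerivAt s (hJ' s)
    have d := (((dRE.const_smul (μ - l)).sub ((hexp s).smul (((dRJ.const_smul μ).add
      ((kernel_hasDerivAt hα hs.1).smul_const (R x))).sub (hJ' s)))).add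
      ((psi_hasDerivAt hα l hs.1).smul_const (R x))).sub (hE' s)
    refine d.congr_deriv ?_
    have h := hR s hs.1.le x
    simp only [Pi.add_apply, Pi.sub_apply, Pi.smul_apply, Function.comp_apply,
      ContinuousLinearMap.coe_restrictScalars', smul_apply, map_smul]
    rw [← h]
    module
  have h0 := integral_eq_sub_of_hasDerivAt_of_le ht hfc.continuousOn hfd (by simp)
  have hf0 : f 0 = 0 := by
    simp [hf, hE, hJ, psi, Real.zero_rpow hα.ne']
  have hft : f t = 0 := by simpa [hf0] using h0.symm
  rw [hf] at hft
  simp only [map_add, map_sub, map_smul, hR t ht x]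
  exact (sub_eq_zero.1 hft).symm

/-- The resolvent form of `(λ − A) L(t) x + E(t) x = φ(t) x`, obtained by integrating
`first_resolvent_identity`. -/
lemma second_resolvent_identity {X : Type*} [NormedAddCommGroup X] [NormedSpace ℂ X]
    [CompleteSpace X] {α : ℝ} (hα : 0 < α) {T J E L : ℝ → X →L[ℂ] X} {R : X →L[ℂ] X} {l μ : ℂ}
    (hT : ∀ x, Continuous fun r => T r x)
    (hJ : ∀ t x, J t x = ∫ r in (0:ℝ)..t, T r x)
    (hE : ∀ t x, E t x = ∫ r in (0:ℝ)..t, (Complex.exp (-l * (r : ℂ)) • T r) x)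
    (hEc : ∀ x, Continuous fun r => E r x)
    (hL : ∀ t x, L t x = ∫ r in (0:ℝ)..t, E r x)
    (hR : ∀ t, 0 ≤ t → ∀ x, R (T t x) = μ • R (J t x) +
      (((t ^ α : ℝ) : ℂ) / ((Real.Gamma (α + 1) : ℝ) : ℂ)) • R x - J t x)
    {t : ℝ} (ht : 0 ≤ t) (x : X) :
    L t x = R ((μ - l) • L t x - E t x + phiConst α l t • x) := by
  have heT : Continuous fun r : ℝ => Complex.exp (-l * (r : ℂ)) • T r x :=
    (by fun_prop : Continuous fun r : ℝ => Complex.exp (-l * (r : ℂ))).smul (hT x)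
  have hcp : Continuous fun r => psi α l r • x := (psi_continuous hα l).smul continuous_const
  have h1 : L t x = ∫ r in (0:ℝ)..t,
      R ((μ - l) • E r x - Complex.exp (-l * (r : ℂ)) • T r x + psi α l r • x) := by
    rw [hL]
    refine integral_congr fun r hr => ?_
    rw [Set.uIcc_of_le ht] at hr
    exact first_resolvent_identity hα hT hJ hE hR hr.1 x
  have hcE : Continuous fun r => (μ - l) • E r x := (hEc x).const_smul _
  have hsum : Continuous fun r =>
      (μ - l) • E r x - Complex.exp (-l * (r : ℂ)) • T r x + psi α l r • x :=
    (hcE.sub heT).add hcp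
  have hdiff : Continuous fun r => (μ - l) • E r x - Complex.exp (-l * (r : ℂ)) • T r x :=
    hcE.sub heT
  refine (h1.trans (ContinuousLinearMap.intervalIntegral_comp_comm R
    (hsum.intervalIntegrable _ _))).trans (congrArg R ?_)
  rw [intervalIntegral.integral_add (hdiff.intervalIntegrable _ _) (hcp.intervalIntegrable _ _),
    intervalIntegral.integral_sub (hcE.intervalIntegrable _ _) (heT.intervalIntegrable _ _),
    intervalIntegral.integral_smul, intervalIntegral.integral_smul_const, ← hL, hE]
  rfl

theorem stmt_3
    {X : Type*} [NormedAddCommGroup X] [NormedSpace ℂ X] [CompleteSpace X]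
    (α : ℝ) (hα : 0 < α)
    (D : Submodule ℂ X) (A : X →ₗ[ℂ] X)
    (S : ℝ → X →L[ℂ] X)
    (hcont : ∀ x : X, ContinuousOn (fun u : ℝ => S u x) (Set.Ici (0:ℝ)))
    (hcomm : ∀ u v : ℝ, 0 ≤ u → 0 ≤ v → ∀ x : X, S u (S v x) = S v (S u x))
    (hres : ∃ μ : ℂ, ∃ R : X →L[ℂ] X, (∀ x : X, R x ∈ D) ∧
      (∀ x : X, μ • R x - A (R x) = x) ∧ (∀ x ∈ D, R (μ • x - A x) = x))
    (hdom : ∀ u : ℝ, 0 ≤ u → ∀ x ∈ D, S u x ∈ D ∧ A (S u x) = S u (A x) ∧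
      S u x = (((u ^ α : ℝ) : ℂ) / ((Real.Gamma (α + 1) : ℝ) : ℂ)) • x +
        ∫ s in (0:ℝ)..u, S s (A x))
    (hint : ∀ u : ℝ, 0 ≤ u → ∀ x : X, (∫ s in (0:ℝ)..u, S s x) ∈ D ∧
      A (∫ s in (0:ℝ)..u, S s x) =
        S u x - (((u ^ α : ℝ) : ℂ) / ((Real.Gamma (α + 1) : ℝ) : ℂ)) • x)
    (l : ℂ) (t : ℝ)
    (ht : 0 ≤ t) (n : ℕ) (hn : 1 ≤ n) :
    ∃ Ln : X →L[ℂ] X,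
      (∀ x : X, Ln x ∈ D ∧
        (l • Ln x - A (Ln x)) + Complex.exp (-(n : ℂ) * l * (t : ℂ)) • (Dop S l t)^[n] x =
          (phiConst α l t) ^ n • x) ∧
      (∀ x : X, Ln (Dop S l t x) = Dop S l t (Ln x)) ∧
      (∀ x ∈ D, l • Ln x - A (Ln x) = Ln (l • x - A x)) := by
  obtain ⟨μ, R, hRD, hR1, hR2⟩ := hres
  -- Continuous extension of `S` to the whole line, constant on `(-∞, 0]`.
  set T : ℝ → X →L[ℂ] X := fun u => S (max u 0) with hTdef
  have hTS : ∀ u, 0 ≤ u → T u = S u := fun u hu => by simp [hTdef, hu]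
  have hT : ∀ x, Continuous fun r => T r x := fun x =>
    (hcont x).comp_continuous (continuous_id.max continuous_const) fun r => Set.mem_Ici.2 (le_max_right _ _)
  obtain ⟨J, hJ⟩ := exists_strong_integral T hT
  have heT : ∀ x, Continuous fun r : ℝ => (Complex.exp (-l * (r : ℂ)) • T r) x := fun x =>
    (by fun_prop : Continuous fun r : ℝ => Complex.exp (-l * (r : ℂ))).smul (hT x)
  obtain ⟨E, hE⟩ := exists_strong_integral (fun r : ℝ => Complex.exp (-l * (r : ℂ)) • T r) heT
  have hEc : ∀ x, Continuous fun r => E r x := fun x => continuous_iff_continuousAt.2 fun s =>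
    (hasDerivAt_strong_integral heT hE x s).continuousAt
  obtain ⟨L, hL⟩ := exists_strong_integral E hEc
  have cT : ∀ u v, Commute (T u) (T v) := fun u v => by
    ext x
    exact hcomm _ _ (le_max_right _ _) (le_max_right _ _) x
  have cRT : ∀ u, Commute R (T u) := fun u => by
    ext x
    change R (T u x) = T u (R x)
    obtain ⟨h1, h2, -⟩ := hdom (max u 0) (le_max_right _ _) (R x) (hRD x)
    have h3 := hR2 _ h1
    rw [h2, ← map_smul, ← map_sub, hR1] at h3
    exact h3
  have cE : ∀ {C : X →L[ℂ] X}, (∀ r, Commute C (T r)) → ∀ r, Commute C (E r) := fun h r =>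
    commute_strong_integral heT hE (fun r => (h r).smul_right _) r
  have cL : ∀ {C : X →L[ℂ] X}, (∀ r, Commute C (T r)) → ∀ r, Commute C (L r) := fun h r =>
    commute_strong_integral hEc hL (cE h) r
  have hRT : ∀ t, 0 ≤ t → ∀ x, R (T t x) = μ • R (J t x) +
      (((t ^ α : ℝ) : ℂ) / ((Real.Gamma (α + 1) : ℝ) : ℂ)) • R x - J t x := by
    intro u hu x
    have hJS : J u x = ∫ s in (0:ℝ)..u, S s x := by
      rw [hJ]
      refine integral_congr fun r hr => ?_
      rw [Set.uIcc_of_le hu] at hr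
      simp only [hTS r hr.1]
    obtain ⟨h1, h2⟩ := hint u hu x
    rw [← hJS] at h1 h2
    have h3 := hR2 _ h1
    rw [h2] at h3
    rw [hTS u hu]
    simp only [map_sub, map_smul] at h3
    nth_rw 2 [← h3]
    module
  have hid := second_resolvent_identity hα hT hJ hE hEc hL hRT ht
  have cEL : Commute (E t) (L t) := cL (fun r => (cE (fun s => cT r s) t).symm) t
  have cRE : Commute R (E t) := cE cRT t
  have cRL : Commute R (L t) := cL cRT t
  -- `E(t) = e^{-λt} D_λ(t)`.
  have hDop : Dop S l t = ⇑(Complex.exp (l * t) • E t) := by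
    funext x
    rw [smul_apply, hE, ← intervalIntegral.integral_smul, Dop]
    refine integral_congr fun r hr => ?_
    rw [Set.uIcc_of_le ht] at hr
    simp only [hTS r hr.1, smul_apply, smul_smul, ← Complex.exp_add]
    congr 2
    push_cast
    ring
  set p := phiConst α l t with hp
  set P : X →L[ℂ] X := ∑ i ∈ Finset.range n, (p • (1 : X →L[ℂ] X)) ^ i * E t ^ (n - 1 - i) with hP
  have cP : ∀ {C : X →L[ℂ] X}, Commute C (E t) → Commute C P := fun h =>
    Commute.sum_right _ _ _ fun i _ =>
      (((Commute.one_right _).smul_right p).pow_right i).mul_right (h.pow_right _)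
  have hgeom : (p • (1 : X →L[ℂ] X) - E t) * P = (p • (1 : X →L[ℂ] X)) ^ n - E t ^ n :=
    ((Commute.one_left (E t)).smul_left p).mul_geom_sum₂ n
  have cRLn : Commute R (L t * P) := cRL.mul_right (cP cRE)
  have hLn : ∀ x, (L t * P) x = R ((μ - l) • (L t * P) x + (p ^ n • x - (E t ^ n) x)) := by
    intro x
    have h1 := hid (P x)
    have h2 := DFunLike.congr_fun hgeom x
    simp only [smul_pow, one_pow, mul_apply_eq_comp, sub_apply,
      smul_apply, one_apply_eq_self] at h2
    rw [← h2]
    refine h1.trans (congrArg R ?_)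
    simp only [mul_apply_eq_comp]
    abel
  refine ⟨L t * P, fun x => ⟨?_, ?_⟩, fun x => ?_, fun x hx => ?_⟩
  · rw [hLn x]
    exact hRD _
  · have h1 := hR1 ((μ - l) • (L t * P) x + (p ^ n • x - (E t ^ n) x))
    rw [← hLn x] at h1
    have h2 : Complex.exp (-(n : ℂ) * l * (t : ℂ)) • (Dop S l t)^[n] x = (E t ^ n) x := by
      rw [hDop, ← FunLike.coe_pow_eq_iterate, smul_pow, smul_apply,
        smul_smul, ← Complex.exp_nat_mul, ← Complex.exp_add]
      convert one_smul ℂ _ using 2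
      rw [← Complex.exp_zero]
      congr 1
      ring
    rw [h2]
    linear_combination (norm := module) h1
  · rw [hDop]
    exact DFunLike.congr_fun ((cEL.mul_right (cP (Commute.refl _))).smul_left _).symm x
  · have h1 := DFunLike.congr_fun cRLn (μ • x - A x)
    simp only [mul_apply_eq_comp R, mul_apply_eq_comp _ R, hR2 x hx] at h1
    have h2 := hR1 ((L t * P) (μ • x - A x))
    rw [h1] at h2
    simp only [map_sub, map_smul] at h2 ⊢
    linear_combination (norm := module) h2
end
end

section
/- Let λ ∈ ℂ, t ≥ 0 and n ≥ 1 an integer. Then for every x ∈ X, (L_λ(t))^n x belongs to D(A^n) and (λ − A)^n (L_λ(t))^n x + D_{λ,n}(t) D_λ(t) x = (φ_λ(t))^n·x; moreover D_{λ,n}(t) commutes with D_λ(t) and with L_λ(t), and for every x ∈ D(A), (λ − A)D_{λ,n}(t)x = D_{λ,n}(t)(λ − A)x. -/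
/-!
Write `K(s) = ∫₀ˢ e^{-λr} S(r) dr` and `k(s) = ∫₀ˢ e^{-λr} r^{α-1}/Γ(α) dr`, so that
`D_λ(s) = e^{λs} K(s)`, `L_λ(t) = ∫₀ᵗ K(s) ds` and `φ_λ(t) = ∫₀ᵗ k(s) ds`. Integrating by parts
against `I(s) = ∫₀ˢ S(r) dr` and using `A I(s) x = S(s) x - s^α/Γ(α+1) x` gives
`(λ - A) K(s) x = k(s) x - e^{-λs} S(s) x`. A second integration gives
`(λ - A) L_λ(t) = φ_λ(t) - e^{-λt} D_λ(t)`; this is the core of `exists_bounded_model`.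

The unbounded operator `A` is handled through its resolvent `R = (μ - A)⁻¹`: the assertion
`y ∈ D(A)`, `A y = w` is equivalent to `R (μ y - w) = y`, an equation between bounded operators, so
it passes under integrals. Likewise `B A ⊆ A B` follows once the bounded operator `B` commutes
with `R`.

Since `L_λ(t)` commutes with `D_λ(t)`, the identity above iterates (`iterate_shift`) to
`(λ - A)^n L_λ(t)^n = (φ_λ(t) - e^{-λt} D_λ(t))^n`, and the binomial theorem
(`binomial_identity`) identifies the right-hand side with `φ_λ(t)^n - D_{λ,n}(t) D_λ(t)`. The
commutation claims hold because `D_{λ,n}(t)` is a polynomial in `D_λ(t)`.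
-/

open MeasureTheory intervalIntegral Pointwise

noncomputable section

/-- The pointwise integral of a strongly continuous family of bounded operators is a bounded
operator: the family is uniformly bounded on compact intervals by Banach–Steinhaus. -/
theorem exists_integral_clm {X : Type*} [NormedAddCommGroup X] [NormedSpace ℂ X] [CompleteSpace X]
    (T : ℝ → X →L[ℂ] X) (hT : ∀ x, Continuous fun r => T r x) :
    ∃ V : ℝ → X →L[ℂ] X, ∀ s x, V s x = ∫ r in (0:ℝ)..s, T r x := by
  have hb : ∀ s : ℝ, ∃ C, ∀ r : Set.uIcc (0:ℝ) s, ‖T r‖ ≤ C := by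
    intro s
    refine banach_steinhaus (g := fun r : Set.uIcc (0:ℝ) s => T r) fun x => ?_
    obtain ⟨C, hC⟩ := isCompact_uIcc.exists_bound_of_continuousOn
      (s := Set.uIcc (0:ℝ) s) (hT x).continuousOn
    exact ⟨C, fun r => hC r r.2⟩
  have hi : ∀ s x, IntervalIntegrable (fun r => T r x) volume 0 s :=
    fun s x => (hT x).intervalIntegrable _ _
  choose C hC using hb
  refine ⟨fun s => LinearMap.mkContinuous
    { toFun := fun x => ∫ r in (0:ℝ)..s, T r x
      map_add' := fun x y => by
        simp only [map_add]
        exact intervalIntegral.integral_add (hi s x) (hi s y)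
      map_smul' := fun c x => by
        simp only [map_smul, RingHom.id_apply]
        exact intervalIntegral.integral_smul c _ } (C s * |s - 0|) ?_, fun s x => rfl⟩
  intro x
  have h := intervalIntegral.norm_integral_le_of_norm_le_const (a := 0) (b := s)
    (f := fun r => T r x) (C := C s * ‖x‖) fun r hr =>
      (T r).le_of_opNorm_le (hC s ⟨r, Set.uIoc_subset_uIcc hr⟩) x
  calc _ ≤ C s * ‖x‖ * |s - 0| := h
    _ = _ := by ring

theorem commute_integral {X : Type*} [NormedAddCommGroup X] [NormedSpace ℂ X] [CompleteSpace X]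
    {T : ℝ → X →L[ℂ] X} (hT : ∀ x, Continuous fun r => T r x) {V B : X →L[ℂ] X} {s : ℝ}
    (hV : ∀ x, V x = ∫ r in (0:ℝ)..s, T r x)
    (hB : ∀ r x, B (T r x) = T r (B x)) (x : X) : B (V x) = V (B x) := by
  rw [hV, hV, ← B.intervalIntegral_comp_comm ((hT x).intervalIntegrable _ _)]
  simp only [hB]

/-- Integration by parts against `e^{-λr}`. Differentiability of `F` is required only on the open
interval, which allows the derivative `r^{α-1}/Γ(α)` with its singularity at `0` when `α < 1`. -/
theorem integral_exp_smul {E : Type*} [NormedAddCommGroup E] [NormedSpace ℂ E] [CompleteSpace E]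
    {F f : ℝ → E} {l : ℂ} {s : ℝ} (hs : 0 ≤ s) (hF : Continuous F) (h0 : F 0 = 0)
    (hd : ∀ r ∈ Set.Ioo 0 s, HasDerivAt F (f r) r) (hf : IntervalIntegrable f volume 0 s) :
    ∫ r in (0:ℝ)..s, Complex.exp (-l * (r : ℂ)) • f r =
      Complex.exp (-l * (s : ℂ)) • F s + l • ∫ r in (0:ℝ)..s, Complex.exp (-l * (r : ℂ)) • F r := by
  have he : Continuous fun r : ℝ => Complex.exp (-l * (r : ℂ)) := by fun_prop
  have hi1 : IntervalIntegrable (fun r : ℝ => Complex.exp (-l * (r : ℂ)) • f r) volume 0 s :=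
    hf.continuousOn_smul he.continuousOn
  have hi2 : IntervalIntegrable (fun r : ℝ => l • Complex.exp (-l * (r : ℂ)) • F r) volume 0 s :=
    Continuous.intervalIntegrable (by fun_prop) _ _
  have hder : ∀ r ∈ Set.Ioo 0 s, HasDerivAt (fun r : ℝ => Complex.exp (-l * (r : ℂ)) • F r)
      (Complex.exp (-l * (r : ℂ)) • f r - l • Complex.exp (-l * (r : ℂ)) • F r) r := by
    intro r hr
    have h1 : HasDerivAt (fun r : ℝ => Complex.exp (-l * (r : ℂ)))
        (Complex.exp (-l * (r : ℂ)) * (-l * 1)) r :=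
      ((Complex.ofRealCLM.hasDerivAt (x := r)).const_mul (-l)).cexp
    refine (h1.smul (hd r hr)).congr_deriv ?_
    module
  have h := intervalIntegral.integral_eq_sub_of_hasDerivAt_of_le hs
    (by fun_prop) hder (hi1.sub hi2)
  rw [intervalIntegral.integral_sub hi1 hi2, intervalIntegral.integral_smul, h0, smul_zero,
    sub_zero] at h
  rw [← h]; abel

theorem integral_exp_rpow {α : ℝ} (hα : 0 < α) (l : ℂ) {s : ℝ} (hs : 0 ≤ s) :
    (∫ r in (0:ℝ)..s,
      Complex.exp (-l * ((r : ℝ) : ℂ)) * ((r ^ (α - 1) : ℝ) : ℂ) / ((Real.Gamma α : ℝ) : ℂ)) =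
    Complex.exp (-l * (s : ℂ)) * (((s ^ α : ℝ) : ℂ) / ((Real.Gamma (α + 1) : ℝ) : ℂ)) +
      l * ∫ r in (0:ℝ)..s, Complex.exp (-l * (r : ℂ)) *
        (((r ^ α : ℝ) : ℂ) / ((Real.Gamma (α + 1) : ℝ) : ℂ)) := by
  have hc : Continuous fun r : ℝ => (((r ^ α : ℝ) : ℂ) / ((Real.Gamma (α + 1) : ℝ) : ℂ)) := by
    have := Real.continuous_rpow_const hα.le
    fun_prop
  have h := integral_exp_smul (l := l) hs hc (f := fun r : ℝ =>
    (((r ^ (α - 1) : ℝ) : ℂ) / ((Real.Gamma α : ℝ) : ℂ))) ?_ ?_ ?_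
  · simpa only [smul_eq_mul, mul_div_assoc] using h
  · simp [Real.zero_rpow hα.ne']
  · intro r hr
    have h1 := ((Real.hasDerivAt_rpow_const (p := α) (Or.inl hr.1.ne')).ofReal_comp).div_const
      ((Real.Gamma (α + 1) : ℝ) : ℂ)
    refine h1.congr_deriv ?_
    have hg := (Real.Gamma_pos_of_pos hα).ne'
    rw [Real.Gamma_add_one hα.ne']
    have hg' : ((Real.Gamma α : ℝ) : ℂ) ≠ 0 := by exact_mod_cast hg
    have ha' : (α : ℂ) ≠ 0 := by exact_mod_cast hα.ne'
    push_cast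
    field_simp
  · have h1 : IntervalIntegrable (fun r : ℝ => r ^ (α - 1)) volume 0 s :=
      intervalIntegral.intervalIntegrable_rpow' (by linarith)
    have h2 : IntervalIntegrable (fun r : ℝ => ((r ^ (α - 1) : ℝ) : ℂ)) volume 0 s :=
      ⟨h1.1.ofReal, h1.2.ofReal⟩
    exact h2.div_const _

/-- `D_λ(t)` and `L_λ(t)` are bounded operators `E` and `L` that commute with each other, `E` commutes
with the resolvent `R = (μ - A)⁻¹`, and `(λ - A) L = φ_λ(t) - e^{-λt} E`. The hypothesis `hint` and
the last conclusion express statements about `A` in the form `R (μ y - w) = y`, which means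
`y ∈ D(A)` and `A y = w`. -/
theorem exists_bounded_model {X : Type*} [NormedAddCommGroup X] [NormedSpace ℂ X] [CompleteSpace X]
    {α : ℝ} (hα : 0 < α) (S : ℝ → X →L[ℂ] X) (hcont : ∀ x, Continuous fun u : ℝ => S u x)
    (hcomm : ∀ u v x, S u (S v x) = S v (S u x))
    (R : X →L[ℂ] X) (hR : ∀ u x, R (S u x) = S u (R x)) (μ : ℂ)
    (hint : ∀ u : ℝ, 0 ≤ u → ∀ x : X, R (μ • (∫ s in (0:ℝ)..u, S s x) - (S u x -
      (((u ^ α : ℝ) : ℂ) / ((Real.Gamma (α + 1) : ℝ) : ℂ)) • x)) = ∫ s in (0:ℝ)..u, S s x)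
    (l : ℂ) {t : ℝ} (ht : 0 ≤ t) :
    ∃ E L : X →L[ℂ] X, (∀ x, Dop S l t x = E x) ∧ (∀ x, Lop S l t x = L x) ∧
      Commute E L ∧ Commute R E ∧
      ∀ x, R (μ • L x - (l • L x - (phiConst α l t • x - Complex.exp (-l * (t : ℂ)) • E x))) =
        L x := by
  have he : Continuous fun r : ℝ => Complex.exp (-l * (r : ℂ)) := by fun_prop
  have hT : ∀ x, Continuous fun r : ℝ => (Complex.exp (-l * (r : ℂ)) • S r) x := by
    intro x
    have := hcont x
    simp only [smul_apply]
    fun_prop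
  obtain ⟨I, hI⟩ := exists_integral_clm S hcont
  obtain ⟨K, hK⟩ := exists_integral_clm _ hT
  have hKc : ∀ x, Continuous fun s => K s x := by
    intro x
    simp only [hK]
    exact intervalIntegral.continuous_primitive (fun a b => (hT x).intervalIntegrable a b) 0
  have hIc : ∀ x, Continuous fun s => I s x := by
    intro x
    simp only [hI]
    exact intervalIntegral.continuous_primitive (fun a b => (hcont x).intervalIntegrable a b) 0
  obtain ⟨L, hL⟩ := exists_integral_clm K hKc
  have hSK : ∀ u s x, S u (K s x) = K s (S u x) := fun u s x =>
    commute_integral hT (hK s) (fun r y => by simp [hcomm u r]) x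
  have hKK : ∀ u s x, K u (K s x) = K s (K u x) := fun u s x =>
    commute_integral hT (hK s) (fun r y => by simp [hSK r]) x
  have hKL : ∀ u s x, K u (L s x) = L s (K u x) := fun u s x =>
    commute_integral hKc (hL s) (fun r y => hKK u r y) x
  have hRK : ∀ s x, R (K s x) = K s (R x) := fun s x =>
    commute_integral hT (hK s) (fun r y => by simp [hR r]) x
  have hD : ∀ s x, Dop S l s x = Complex.exp (l * (s : ℂ)) • K s x := by
    intro s x
    rw [hK, ← intervalIntegral.integral_smul]
    refine intervalIntegral.integral_congr fun r _ => ?_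
    simp only [smul_apply, smul_smul, ← Complex.exp_add]
    congr 2
    push_cast
    ring
  have hDK : ∀ (s : ℝ) x, Complex.exp (-l * (s : ℂ)) • Dop S l s x = K s x := by
    intro s x
    rw [hD, smul_smul, ← Complex.exp_add]
    simp
  -- integration by parts: `K(s) = e^{-λs} I(s) + λ ∫₀ˢ e^{-λr} I(r) dr`
  have hKI : ∀ s, 0 ≤ s → ∀ x, K s x = Complex.exp (-l * (s : ℂ)) • I s x +
      l • ∫ r in (0:ℝ)..s, Complex.exp (-l * (r : ℂ)) • I r x := by
    intro s hs x
    rw [hK]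
    refine integral_exp_smul hs (hIc x) (by simp [hI]) (fun r _ => ?_)
      ((hcont x).intervalIntegrable _ _)
    simp only [hI]
    exact intervalIntegral.integral_hasDerivAt_right ((hcont x).intervalIntegrable _ _)
      ((hcont x).stronglyMeasurableAtFilter _ _) (hcont x).continuousAt
  have hg : Continuous fun r : ℝ => (((r ^ α : ℝ) : ℂ) / ((Real.Gamma (α + 1) : ℝ) : ℂ)) := by
    have := Real.continuous_rpow_const hα.le
    fun_prop
  set k : ℝ → ℂ := fun s => ∫ r in (0:ℝ)..s,
      Complex.exp (-l * ((r : ℝ) : ℂ)) * ((r ^ (α - 1) : ℝ) : ℂ) / ((Real.Gamma α : ℝ) : ℂ)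
    with hk
  -- `(μ - A) K(s) x = μ K(s) x - e^{-λs} S(s) x - λ K(s) x + k(s) x`, written through `R`
  have hRKs : ∀ s, 0 ≤ s → ∀ x, R (μ • K s x - (l • K s x - (k s • x -
      Complex.exp (-l * (s : ℂ)) • S s x))) = K s x := by
    intro s hs x
    have hSx := hcont x
    have hIx := hIc x
    have h2 : (∫ r in (0:ℝ)..s, Complex.exp (-l * (r : ℂ)) • I r x) =
        R (μ • (∫ r in (0:ℝ)..s, Complex.exp (-l * (r : ℂ)) • I r x) - (K s x -
          (∫ r in (0:ℝ)..s, Complex.exp (-l * (r : ℂ)) *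
        (((r ^ α : ℝ) : ℂ) / ((Real.Gamma (α + 1) : ℝ) : ℂ))) • x)) := by
      rw [hK, ← intervalIntegral.integral_smul_const, ← intervalIntegral.integral_smul,
        ← intervalIntegral.integral_sub, ← intervalIntegral.integral_sub,
        ← R.intervalIntegral_comp_comm]
      · refine intervalIntegral.integral_congr fun r hr => ?_
        rw [Set.uIcc_of_le hs] at hr
        have h := hint r hr.1 x
        rw [← hI] at h
        nth_rewrite 1 [← h]
        rw [← map_smul]
        congr 1
        simp only [smul_apply]
        module
      all_goals
        try simp only [smul_apply]
        exact Continuous.intervalIntegrable (by fun_prop) _ _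
    have h1 := hint s hs x
    rw [← hI] at h1
    have hks := integral_exp_rpow hα l hs
    have hKs := hKI s hs x
    change k s = _ at hks
    set J := ∫ r in (0:ℝ)..s, Complex.exp (-l * (r : ℂ)) • I r x
    set G := ∫ r in (0:ℝ)..s, Complex.exp (-l * (r : ℂ)) *
        (((r ^ α : ℝ) : ℂ) / ((Real.Gamma (α + 1) : ℝ) : ℂ))
    set g := (((s ^ α : ℝ) : ℂ) / ((Real.Gamma (α + 1) : ℝ) : ℂ))
    have e1 : μ • K s x - (l • K s x - (k s • x - Complex.exp (-l * (s : ℂ)) • S s x)) =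
        Complex.exp (-l * (s : ℂ)) • (μ • I s x - (S s x - g • x)) +
        l • (μ • J - (K s x - G • x)) := by
      rw [hks]
      nth_rewrite 1 [hKs]
      module
    rw [e1, map_add, map_smul, map_smul, h1, ← h2, ← hKs]
  have hkc : IntervalIntegrable k volume 0 t := by
    refine ContinuousOn.intervalIntegrable ?_
    rw [Set.uIcc_of_le ht]
    refine ContinuousOn.congr (f := fun s : ℝ =>
      Complex.exp (-l * (s : ℂ)) * (((s ^ α : ℝ) : ℂ) / ((Real.Gamma (α + 1) : ℝ) : ℂ)) +
      l * ∫ r in (0:ℝ)..s, Complex.exp (-l * (r : ℂ)) *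
        (((r ^ α : ℝ) : ℂ) / ((Real.Gamma (α + 1) : ℝ) : ℂ))) ?_
      (fun s hs => integral_exp_rpow hα l hs.1)
    have := intervalIntegral.continuous_primitive (fun a b => (he.mul hg).intervalIntegrable
      (μ := volume) a b) 0
    exact Continuous.continuousOn (by fun_prop)
  have hLop : ∀ x, Lop S l t x = L t x := by
    intro x
    rw [hL]
    exact intervalIntegral.integral_congr fun s _ => hDK s x
  refine ⟨Complex.exp (l * (t : ℂ)) • K t, L t, hD t, hLop, ?_, ?_, fun x => ?_⟩
  · ext x
    simp [hKL]
  · ext x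
    simp [hRK]
  · have hKx := hKc x
    have hE : Complex.exp (-l * (t : ℂ)) • (Complex.exp (l * (t : ℂ)) • K t) x = K t x := by
      rw [smul_apply, ← hD, hDK]
    have hφ : phiConst α l t = ∫ s in (0:ℝ)..t, k s := rfl
    have hi : ∀ c : ℂ, IntervalIntegrable (fun s => c • K s x) volume 0 t :=
      fun c => Continuous.intervalIntegrable (by fun_prop) _ _
    have hkx : IntervalIntegrable (fun s => k s • x) volume 0 t := by
      exact ⟨hkc.1.smul_const x, hkc.2.smul_const x⟩
    have hT' : IntervalIntegrable (fun r : ℝ => (Complex.exp (-l * (r : ℂ)) • S r) x) volume 0 t :=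
      (hT x).intervalIntegrable _ _
    rw [hE, hφ, hK, hL, ← intervalIntegral.integral_smul_const,
      ← intervalIntegral.integral_sub hkx hT', ← intervalIntegral.integral_smul,
      ← intervalIntegral.integral_smul, ← intervalIntegral.integral_sub (hi l) (hkx.sub hT'),
      ← intervalIntegral.integral_sub (hi μ) ((hi l).sub (hkx.sub hT')),
      ← R.intervalIntegral_comp_comm ((hi μ).sub ((hi l).sub (hkx.sub hT')))]
    refine intervalIntegral.integral_congr fun s hs => ?_
    rw [Set.uIcc_of_le ht] at hs
    exact hRKs s hs.1 x

/-- If `f ∘ L = B` and `B` commutes with `L`, then `f^n L^n = B^n`: each application of `f` turns one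
factor `L` into a factor `B`, which is moved to the right of the remaining powers of `L`. -/
theorem iterate_shift {X : Type*} [NormedAddCommGroup X] [NormedSpace ℂ X]
    (D : Set X) (f : X → X) (L B : X →L[ℂ] X) (hLD : ∀ x, L x ∈ D) (hf : ∀ x, f (L x) = B x)
    (hBL : Commute B L) (n : ℕ) (x : X) :
    (L ^ n) x ∈ iterDom D f n ∧ f^[n] ((L ^ n) x) = (B ^ n) x := by
  induction n generalizing x with
  | zero => exact ⟨Set.mem_univ _, rfl⟩
  | succ n ih =>
    have h1 : (L ^ (n + 1)) x = L ((L ^ n) x) := by rw [pow_succ']; rfl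
    have h2 : f ((L ^ (n + 1)) x) = (L ^ n) (B x) := by
      rw [h1, hf]
      exact congrArg (fun C : X →L[ℂ] X => C x) (hBL.pow_right n).eq
    refine ⟨⟨h1 ▸ hLD _, ?_⟩, ?_⟩
    · rw [h2]
      exact (ih (B x)).1
    · rw [Function.iterate_succ_apply, h2, (ih (B x)).2, pow_succ]
      rfl

/-- The binomial expansion of `(p - eE)^n`; the terms with `i ≥ 1` each contain a factor `-E`, and
extracting it leaves the sum that defines `D_{λ,n}`. -/
theorem binomial_identity {M : Type*} [Ring M] [Algebra ℂ M] (E : M) (p e : ℂ) (n : ℕ) :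
    (p • (1 : M) - e • E) ^ n +
      (∑ i ∈ Finset.Icc 1 n, ((n.choose i : ℂ) * p ^ (n - i) * e ^ i) • (-E) ^ (i - 1)) * E =
      p ^ n • (1 : M) := by
  have hc : Commute (-(e • E)) (p • (1 : M)) := (Commute.one_right _).smul_right p
  have h0 : p • (1 : M) - e • E = -(e • E) + p • (1 : M) := by abel
  have h1 : ∀ i, (-(e • E)) ^ i * (p • (1 : M)) ^ (n - i) * (n.choose i : M) =
      ((n.choose i : ℂ) * p ^ (n - i) * e ^ i) • (-E) ^ i := by
    intro i
    rw [← smul_neg, smul_pow, smul_pow, one_pow, mul_smul_comm, mul_one, ← nsmul_eq_mul',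
      ← Nat.cast_smul_eq_nsmul ℂ, smul_smul, smul_smul]
  rw [h0, hc.add_pow, Finset.sum_congr rfl fun i _ => h1 i, Finset.sum_mul,
    Finset.range_eq_Ico, Finset.sum_eq_sum_Ico_succ_bot (Nat.succ_pos n)]
  have h2 : Finset.Icc 1 n = Finset.Ico (0 + 1) n.succ := by ext; simp
  rw [h2, add_assoc, ← Finset.sum_add_distrib, Finset.sum_eq_zero]
  · simp
  · intro i hi
    obtain ⟨j, rfl⟩ : ∃ j, i = j + 1 := ⟨i - 1, by have := (Finset.mem_Ico.1 hi).1; omega⟩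
    rw [Nat.add_sub_cancel, smul_mul_assoc, pow_succ (-E), mul_neg, smul_neg,
      neg_add_cancel]

theorem stmt_4
    {X : Type*} [NormedAddCommGroup X] [NormedSpace ℂ X] [CompleteSpace X]
    (α : ℝ) (hα : 0 < α)
    (D : Submodule ℂ X) (A : X →ₗ[ℂ] X)
    (S : ℝ → X →L[ℂ] X)
    (hcont : ∀ x : X, ContinuousOn (fun u : ℝ => S u x) (Set.Ici (0:ℝ)))
    (hcomm : ∀ u v : ℝ, 0 ≤ u → 0 ≤ v → ∀ x : X, S u (S v x) = S v (S u x))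
    (hres : ∃ μ : ℂ, ∃ R : X →L[ℂ] X, (∀ x : X, R x ∈ D) ∧
      (∀ x : X, μ • R x - A (R x) = x) ∧ (∀ x ∈ D, R (μ • x - A x) = x))
    (hdom : ∀ u : ℝ, 0 ≤ u → ∀ x ∈ D, S u x ∈ D ∧ A (S u x) = S u (A x) ∧
      S u x = (((u ^ α : ℝ) : ℂ) / ((Real.Gamma (α + 1) : ℝ) : ℂ)) • x +
        ∫ s in (0:ℝ)..u, S s (A x))
    (hint : ∀ u : ℝ, 0 ≤ u → ∀ x : X, (∫ s in (0:ℝ)..u, S s x) ∈ D ∧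
      A (∫ s in (0:ℝ)..u, S s x) =
        S u x - (((u ^ α : ℝ) : ℂ) / ((Real.Gamma (α + 1) : ℝ) : ℂ)) • x)
    (l : ℂ) (t : ℝ)
    (ht : 0 ≤ t) (n : ℕ) (hn : 1 ≤ n) :
    (∀ x : X, (Lop S l t)^[n] x ∈ iterDom (D : Set X) (fun y => l • y - A y) n ∧
      (fun y => l • y - A y)^[n] ((Lop S l t)^[n] x) + Dln S α l t n (Dop S l t x) =
        (phiConst α l t) ^ n • x) ∧
    (∀ x : X, Dln S α l t n (Dop S l t x) = Dop S l t (Dln S α l t n x)) ∧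
    (∀ x : X, Dln S α l t n (Lop S l t x) = Lop S l t (Dln S α l t n x)) ∧
    (∀ x ∈ D, l • Dln S α l t n x - A (Dln S α l t n x) = Dln S α l t n (l • x - A x)) := by
  obtain ⟨μ, R, hRD, hR1, hR2⟩ := hres
  have hRiff : ∀ y w, R (μ • y - w) = y → y ∈ D ∧ A y = w := by
    intro y w h
    refine ⟨h ▸ hRD _, ?_⟩
    have h1 := hR1 (μ • y - w)
    rw [h] at h1
    exact sub_right_injective h1
  -- extending `S` by `S 0` to negative times makes its orbits continuous on the whole line
  let T : ℝ → X →L[ℂ] X := fun u => S (max u 0)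
  have hTS : ∀ u, 0 ≤ u → T u = S u := fun u hu => by simp [T, max_eq_left hu]
  have hTc : ∀ x, Continuous fun u => T u x := fun x =>
    (hcont x).comp_continuous (by fun_prop) fun u => le_max_right u 0
  have hTcomm : ∀ u v x, T u (T v x) = T v (T u x) := fun u v x =>
    hcomm _ _ (le_max_right _ _) (le_max_right _ _) x
  have hRT : ∀ u x, R (T u x) = T u (R x) := by
    intro u x
    obtain ⟨h1, h2, -⟩ := hdom (max u 0) (le_max_right _ _) (R x) (hRD x)
    have h3 := hR2 _ h1
    rw [h2, ← map_smul, ← map_sub, hR1] at h3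
    exact h3
  have hTint : ∀ u, 0 ≤ u → ∀ x, (∫ s in (0:ℝ)..u, T s x) = ∫ s in (0:ℝ)..u, S s x := by
    intro u hu x
    refine intervalIntegral.integral_congr fun r hr => ?_
    rw [Set.uIcc_of_le hu] at hr
    simp only [hTS r hr.1]
  have hDT : ∀ s, 0 ≤ s → ∀ x, Dop S l s x = Dop T l s x := by
    intro u hu x
    refine intervalIntegral.integral_congr fun r hr => ?_
    rw [Set.uIcc_of_le hu] at hr
    simp only [hTS r hr.1]
  have hLT : ∀ x, Lop S l t x = Lop T l t x := by
    intro x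
    refine intervalIntegral.integral_congr fun r hr => ?_
    rw [Set.uIcc_of_le ht] at hr
    simp only [hDT r hr.1]
  obtain ⟨E, L, hE, hL, hEL, hRE, hRL⟩ := exists_bounded_model hα T hTc hTcomm R hRT μ
    (fun u hu x => by
      rw [hTint u hu, hTS u hu, ← (hint u hu x).2]
      exact hR2 _ (hint u hu x).1) l ht
  have hDE : Dop S l t = E := funext fun x => (hDT t ht x).trans (hE x)
  have hLL : Lop S l t = L := funext fun x => (hLT x).trans (hL x)
  set p := phiConst α l t with hp
  set e := Complex.exp (-l * (t : ℂ)) with he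
  let P : X →L[ℂ] X :=
    ∑ i ∈ Finset.Icc 1 n, ((n.choose i : ℂ) * p ^ (n - i) * e ^ i) • (-E) ^ (i - 1)
  have hP : ∀ x, Dln S α l t n x = P x := by
    intro x
    simp only [Dln, P, sum_apply, smul_apply]
    refine Finset.sum_congr rfl fun i _ => ?_
    have h1 : Complex.exp (-(i : ℂ) * l * (t : ℂ)) = e ^ i := by
      rw [he, ← Complex.exp_nat_mul]
      congr 1
      ring
    have h2 : (fun y => - Dop S l t y) = ⇑(-E) := by
      rw [hDE]
      rfl
    rw [h1, h2, ← hp, FunLike.coe_pow_eq_iterate]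
  have hcommP : ∀ B : X →L[ℂ] X, Commute B E → Commute B P := fun B hB =>
    Commute.sum_right _ _ _ fun i _ => ((hB.neg_right).pow_right _).smul_right _
  have happ : ∀ {B C : X →L[ℂ] X}, Commute B C → ∀ x, B (C x) = C (B x) := fun h x =>
    congrArg (fun F : X →L[ℂ] X => F x) h.eq
  refine ⟨fun x => ?_, fun x => ?_, fun x => ?_, fun x hx => ?_⟩
  · have hLA : ∀ x, L x ∈ D ∧ A (L x) = l • L x - (p • x - e • E x) := fun x =>
      hRiff _ _ (hRL x)
    have hBL : Commute (p • (1 : X →L[ℂ] X) - e • E) L :=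
      ((Commute.one_left L).smul_left p).sub_left (hEL.smul_left e)
    obtain ⟨h1, h2⟩ := iterate_shift (D : Set X) (fun y => l • y - A y) L
      (p • (1 : X →L[ℂ] X) - e • E) (fun x => (hLA x).1)
      (fun x => by simp [(hLA x).2]) hBL n x
    have hpow : (Lop S l t)^[n] x = (L ^ n) x := by
      rw [hLL, FunLike.coe_pow_eq_iterate]
    rw [hpow, h2, hP, hDE]
    refine ⟨h1, ?_⟩
    have h3 := congrArg (fun F : X →L[ℂ] X => F x) (binomial_identity E p e n)
    exact h3
  · rw [hP, hP, hDE]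
    exact (happ (hcommP E (Commute.refl E)) x).symm
  · rw [hP, hP, hLL]
    exact (happ (hcommP L hEL.symm) x).symm
  · rw [hP, hP]
    have h1 : R (μ • P x - P (A x)) = P x := by
      rw [← map_smul, ← map_sub, happ (hcommP R hRE), hR2 x hx]
    rw [(hRiff _ _ h1).2, map_sub, map_smul]
end
end

section
/- Let λ ∈ ℂ, t > 0 with φ_λ(t) ≠ 0, and let n ≥ 1 be an integer. If the range of the bounded operator (c_λ(t)·I − S(t))^n is closed in X, then the range of (λ − A)^n (defined on D(A^n)) is closed in X. -/
/-!
Write `T = λ - A`, `V = c_λ(t) - S(t)`. Both `D_λ(t)` and `L_λ(t)` are weighted integrals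
`∫₀ᵗ g(r) S(r) x dr` with smooth weights, namely `e^{λ(t-r)}` and `(t-r) e^{-λr}`. Hence they are
bounded (`exists_weighted_integral`), commute with each other, with `S` and with the resolvent
(`commute_weighted_integral`), and integration by parts together with closedness of `A`
(`generator_weighted_integral`) gives
`T D_λ(t) = V`, `D_λ(t) T ⊆ V` and `T L_λ(t) + e^{-λt} D_λ(t) = φ_λ(t)`.

Then the range of `T^n` is exactly the preimage of the range of `V^n` under the bounded operator
`D_λ(t)^n` (`iterate_image_eq_preimage`), so it is closed when the latter is. One inclusion is
`D_λ(t)^n T^n ⊆ V^n`. For the other, put `U = φ_λ(t) - e^{-λt} D_λ(t) = T L_λ(t)`. Since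
`φ_λ(t) ≠ 0`, the polynomials `Z^n` and `(φ_λ(t) - e^{-λt} Z)^n` are coprime, so
`a D_λ(t)^n + b U^n = 1` with `a`, `b` polynomials in `D_λ(t)`. If `D_λ(t)^n y = V^n z`, then
`y = V^n (a z) + U^n (b y) = T^n (D_λ(t)^n a z + L_λ(t)^n b y)`.
-/


open MeasureTheory intervalIntegral Pointwise

noncomputable section

/-! ### Algebra: ranges of powers of an unbounded operator -/

/-- If `T B = W` everywhere, with `B` mapping into the domain and commuting with `W`, then
`W^n = T^n B^n`; in particular the range of `W^n` lies in the range of `T^n`. -/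
lemma iterate_pow_apply_eq {X : Type*} [NormedAddCommGroup X] [NormedSpace ℂ X]
    (D : Set X) (T : X → X) (B W : X →L[ℂ] X)
    (hmem : ∀ x, B x ∈ D) (hT : ∀ x, T (B x) = W x) (hBW : Commute B W) (n : ℕ) :
    ∀ x, (B ^ n) x ∈ iterDom D T n ∧ T^[n] ((B ^ n) x) = (W ^ n) x := by
  induction n with
  | zero => intro x; simp [iterDom]
  | succ n ih =>
    intro x
    have h1 : T ((B ^ (n + 1)) x) = (B ^ n) (W x) := by
      rw [pow_succ', mul_apply_eq_comp, hT, ← mul_apply_eq_comp,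
        ← mul_apply_eq_comp, (hBW.pow_left n).eq]
    refine ⟨⟨?_, ?_⟩, ?_⟩
    · rw [pow_succ', mul_apply_eq_comp]
      exact hmem _
    · rw [h1]
      exact (ih _).1
    · rw [Function.iterate_succ_apply, h1, (ih _).2, pow_succ, mul_apply_eq_comp]

/-- If `B T = W` on the domain of `T` and `B` commutes with `W`, then `B^n T^n = W^n` on the
domain of `T^n`. -/
lemma pow_iterate_apply {X : Type*} [NormedAddCommGroup X] [NormedSpace ℂ X]
    (D : Set X) (T : X → X) (B W : X →L[ℂ] X)
    (hT : ∀ x ∈ D, B (T x) = W x) (hBW : Commute B W) (n : ℕ) :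
    ∀ x ∈ iterDom D T n, (B ^ n) (T^[n] x) = (W ^ n) x := by
  induction n with
  | zero => intro x _; simp
  | succ n ih =>
    intro x hx
    rw [Function.iterate_succ_apply, pow_succ', mul_apply_eq_comp, ih _ hx.2,
      ← mul_apply_eq_comp, (hBW.pow_right n).eq, mul_apply_eq_comp,
      hT x hx.1, ← mul_apply_eq_comp, ← pow_succ]

lemma iterate_image_add_mem {X : Type*} [AddCommGroup X] [Module ℂ X]
    (D : Submodule ℂ X) (T : X →ₗ[ℂ] X) (n : ℕ) :
    ∀ x ∈ iterDom (D : Set X) T n, ∀ y ∈ iterDom (D : Set X) T n,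
      x + y ∈ iterDom (D : Set X) T n ∧ T^[n] (x + y) = T^[n] x + T^[n] y := by
  induction n with
  | zero => intro x _ y _; simp [iterDom]
  | succ n ih =>
    intro x hx y hy
    obtain ⟨h1, h2⟩ := ih _ hx.2 _ hy.2
    refine ⟨⟨D.add_mem hx.1 hy.1, ?_⟩, ?_⟩
    · rw [map_add]; exact h1
    · simp only [Function.iterate_succ_apply, map_add]; exact h2

/-- The abstract form of the theorem. Let `B`, `L` be commuting bounded operators with values in
the domain of `T`, with `T B = V`, `B T = V` on the domain and `T L + e B = φ`, `φ ≠ 0`. Then the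
range of `T^n` is the preimage of the range of `V^n` under the bounded operator `B^n`. -/
lemma iterate_image_eq_preimage {X : Type*} [NormedAddCommGroup X] [NormedSpace ℂ X]
    (D : Submodule ℂ X) (T : X →ₗ[ℂ] X) (B L V : X →L[ℂ] X) (e φ : ℂ) (hφ : φ ≠ 0)
    (hBmem : ∀ x, B x ∈ D) (hTB : ∀ x, T (B x) = V x) (hBT : ∀ x ∈ D, B (T x) = V x)
    (hLmem : ∀ x, L x ∈ D) (hTL : ∀ x, T (L x) = φ • x - e • B x)
    (hBV : Commute B V) (hLB : Commute L B) (n : ℕ) :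
    T^[n] '' iterDom (D : Set X) T n = ⇑(B ^ n) ⁻¹' Set.range ⇑(V ^ n) := by
  set U : X →L[ℂ] X := φ • 1 - e • B with hU
  have hLU : Commute L U :=
    ((Commute.one_right L).smul_right φ).sub_right (hLB.smul_right e)
  ext y
  constructor
  · rintro ⟨x, hx, rfl⟩
    exact ⟨x, (pow_iterate_apply (D : Set X) T B V hBT hBV n x hx).symm⟩
  · rintro ⟨z, hz⟩
    -- Bezout: the polynomials `Z^n` and `(φ - e Z)^n` are coprime because `φ ≠ 0`.
    have hcop : IsCoprime (Polynomial.X ^ n : Polynomial ℂ)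
        ((Polynomial.C φ - Polynomial.C e * Polynomial.X) ^ n) := by
      apply IsCoprime.pow
      refine ⟨Polynomial.C (φ⁻¹ * e), Polynomial.C φ⁻¹, ?_⟩
      have : Polynomial.C φ⁻¹ * Polynomial.C φ = 1 := by
        rw [← Polynomial.C_mul, inv_mul_cancel₀ hφ, Polynomial.C_1]
      rw [Polynomial.C_mul]
      linear_combination this
    obtain ⟨a, b, hab⟩ := hcop
    have hUe : Polynomial.aeval B (Polynomial.C φ - Polynomial.C e * Polynomial.X) = U := by
      simp [hU, Algebra.algebraMap_eq_smul_one]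
    have hab' : Polynomial.aeval B a * B ^ n + Polynomial.aeval B b * U ^ n = 1 := by
      have := congrArg (Polynomial.aeval B) hab
      simpa [map_add, map_mul, map_pow, hUe, -map_sub] using this
    have hcomm : ∀ (p : Polynomial ℂ) (W : X →L[ℂ] X), Commute B W →
        Commute (Polynomial.aeval B p) W := by
      intro p W hW
      induction p using Polynomial.induction_on' with
      | add p q hp hq => rw [map_add]; exact hp.add_left hq
      | monomial k c =>
        rw [Polynomial.aeval_monomial]
        exact (Algebra.commute_algebraMap_left c W).mul_left (hW.pow_left k)
    have hBU : Commute B U :=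
      ((Commute.one_right B).smul_right φ).sub_right ((Commute.refl B).smul_right e)
    have hy : y = (V ^ n) (Polynomial.aeval B a z) + (U ^ n) (Polynomial.aeval B b y) := by
      have h1 : (Polynomial.aeval B a) ((V ^ n) z) = (V ^ n) (Polynomial.aeval B a z) := by
        have := ((hcomm a V hBV).pow_right n).eq
        exact congrArg (fun F : X →L[ℂ] X => F z) this
      have h2 : (Polynomial.aeval B b) ((U ^ n) y) = (U ^ n) (Polynomial.aeval B b y) := by
        have := ((hcomm b U hBU).pow_right n).eq
        exact congrArg (fun F : X →L[ℂ] X => F y) this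
      have h3 := congrArg (fun F : X →L[ℂ] X => F y) hab'
      simp only [add_apply, mul_apply_eq_comp,
        one_apply_eq_self] at h3
      rw [← h1, ← h2, hz, h3]
    obtain ⟨m1, e1⟩ := iterate_pow_apply_eq (D : Set X) T B V hBmem hTB hBV n
      (Polynomial.aeval B a z)
    obtain ⟨m2, e2⟩ := iterate_pow_apply_eq (D : Set X) T L U hLmem
      (fun x => by simp [hTL, hU]) hLU n (Polynomial.aeval B b y)
    obtain ⟨m3, e3⟩ := iterate_image_add_mem D T n _ m1 _ m2
    exact ⟨_, m3, by rw [e3, e1, e2, ← hy]⟩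

/-! ### Weighted integrals of the semigroup -/

/-- Integration by parts against the primitive of `f`, where `f` need only be integrable up to
the endpoints (it may blow up there, as `r^{α-1}` does at `0`). -/
lemma integral_smul_eq_sub_primitive {E : Type*} [NormedAddCommGroup E] [NormedSpace ℂ E]
    [CompleteSpace E] {t : ℝ} (ht : 0 < t) (g g' : ℝ → ℂ) (f : ℝ → E)
    (hg : ∀ r, HasDerivAt g (g' r) r) (hg' : Continuous g')
    (hf : ContinuousOn f (Set.Ioo 0 t)) (hfi : IntervalIntegrable f volume 0 t) :
    ∫ r in (0:ℝ)..t, g r • f r =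
      g t • (∫ r in (0:ℝ)..t, f r) - ∫ r in (0:ℝ)..t, g' r • ∫ s in (0:ℝ)..r, f s := by
  have hgc : Continuous g := continuous_iff_continuousAt.2 fun r => (hg r).continuousAt
  have hprim : ContinuousOn (fun u => ∫ s in (0:ℝ)..u, f s) (Set.uIcc 0 t) := by
    apply intervalIntegral.continuousOn_primitive_interval
    rw [Set.uIcc_of_le ht.le]
    exact (intervalIntegrable_iff_integrableOn_Icc_of_le ht.le enorm_ne_top).1 hfi
  have hder : ∀ x ∈ Set.Ioo (min 0 t) (max 0 t),
      HasDerivWithinAt (fun u => ∫ s in (0:ℝ)..u, f s) (f x) (Set.Ioi x) x := by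
    intro x hx
    rw [min_eq_left ht.le, max_eq_right ht.le] at hx
    refine (intervalIntegral.integral_hasDerivAt_right ?_ ?_ ?_).hasDerivWithinAt
    · apply hfi.mono_set
      rw [Set.uIcc_of_le ht.le, Set.uIcc_of_le hx.1.le]
      exact Set.Icc_subset_Icc le_rfl hx.2.le
    · exact hf.stronglyMeasurableAtFilter isOpen_Ioo x hx
    · exact hf.continuousAt (isOpen_Ioo.mem_nhds hx)
  have := intervalIntegral.integral_smul_deriv_eq_deriv_smul_of_hasDeriv_right (a := 0) (b := t)
    (u := g) (u' := g') (v := fun u => ∫ s in (0:ℝ)..u, f s) (v' := f)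
    hgc.continuousOn hprim (fun x _ => (hg x).hasDerivWithinAt) hder
    (hg'.intervalIntegrable 0 t) hfi
  simpa using this

/-- The bounded operator `x ↦ ∫₀ᵗ g(r) S(r) x dr`; boundedness comes from the uniform boundedness
principle applied to `S` on `[0, t]`. -/
lemma exists_weighted_integral {X : Type*} [NormedAddCommGroup X] [NormedSpace ℂ X]
    [CompleteSpace X] (S : ℝ → X →L[ℂ] X)
    (hcont : ∀ x : X, ContinuousOn (fun u : ℝ => S u x) (Set.Ici (0:ℝ)))
    {t : ℝ} (ht : 0 < t) (g : ℝ → ℂ) (hg : Continuous g) :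
    ∃ J : X →L[ℂ] X, ∀ x, J x = ∫ r in (0:ℝ)..t, g r • S r x := by
  have hcI : ∀ x, ContinuousOn (fun r => g r • S r x) (Set.Icc 0 t) := fun x =>
    hg.continuousOn.smul ((hcont x).mono Set.Icc_subset_Ici_self)
  have hI : ∀ x, IntervalIntegrable (fun r => g r • S r x) volume 0 t := fun x =>
    (hcI x).intervalIntegrable_of_Icc ht.le
  obtain ⟨C, hC⟩ : ∃ C, ∀ r : Set.Icc (0:ℝ) t, ‖g r • S r‖ ≤ C := by
    apply banach_steinhaus
    intro x
    obtain ⟨C, hC⟩ := isCompact_Icc.exists_bound_of_continuousOn (hcI x)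
    exact ⟨C, fun r => hC r r.2⟩
  refine ⟨LinearMap.mkContinuous
    { toFun := fun x => ∫ r in (0:ℝ)..t, g r • S r x
      map_add' := fun x y => by
        rw [← intervalIntegral.integral_add (hI x) (hI y)]
        simp
      map_smul' := fun c x => by
        simp only [map_smul, RingHom.id_apply]
        rw [← intervalIntegral.integral_smul]
        simp only [smul_comm c] } (C * |t - 0|) ?_, fun x => rfl⟩
  intro x
  refine (intervalIntegral.norm_integral_le_of_norm_le_const (C := C * ‖x‖) ?_).trans
    (le_of_eq (by ring))
  intro r hr
  rw [Set.uIoc_of_le ht.le] at hr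
  exact (ContinuousLinearMap.le_opNorm (g r • S r) x).trans
    (mul_le_mul_of_nonneg_right (hC ⟨r, hr.1.le, hr.2⟩) (norm_nonneg _))

/-- A bounded operator commuting with every `S(r)` commutes with the weighted integrals of `S`. -/
lemma commute_weighted_integral {X : Type*} [NormedAddCommGroup X] [NormedSpace ℂ X]
    [CompleteSpace X] (S : ℝ → X →L[ℂ] X)
    (hcont : ∀ x : X, ContinuousOn (fun u : ℝ => S u x) (Set.Ici (0:ℝ)))
    {t : ℝ} (ht : 0 < t) (g : ℝ → ℂ) (hg : Continuous g) (J W : X →L[ℂ] X)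
    (hJ : ∀ x, J x = ∫ r in (0:ℝ)..t, g r • S r x)
    (hW : ∀ r, 0 ≤ r → ∀ x, W (S r x) = S r (W x)) : Commute W J := by
  have hI : ∀ x, IntervalIntegrable (fun r => g r • S r x) volume 0 t := fun x =>
    (hg.continuousOn.smul ((hcont x).mono Set.Icc_subset_Ici_self)).intervalIntegrable_of_Icc ht.le
  ext x
  rw [mul_apply_eq_comp, mul_apply_eq_comp, hJ, hJ,
    ← ContinuousLinearMap.intervalIntegral_comp_comm W (hI x)]
  apply intervalIntegral.integral_congr
  intro r hr
  rw [Set.uIcc_of_le ht.le] at hr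
  simp [hW r hr.1]

lemma integrable_kernel {α : ℝ} (hα : 0 < α) (a b : ℝ) :
    IntervalIntegrable (fun r : ℝ => ((r ^ (α - 1) : ℝ) : ℂ) / ((Real.Gamma α : ℝ) : ℂ))
      volume a b := by
  have h := intervalIntegral.intervalIntegrable_rpow' (a := a) (b := b) (r := α - 1) (by linarith)
  have h' : IntervalIntegrable (fun r : ℝ => ((r ^ (α - 1) : ℝ) : ℂ)) volume a b :=
    ⟨Integrable.ofReal h.1, Integrable.ofReal h.2⟩
  exact h'.div_const _

lemma continuousOn_kernel (α t : ℝ) :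
    ContinuousOn (fun r : ℝ => ((r ^ (α - 1) : ℝ) : ℂ) / ((Real.Gamma α : ℝ) : ℂ))
      (Set.Ioo 0 t) := by
  apply ContinuousOn.div_const
  apply Complex.continuous_ofReal.comp_continuousOn
  exact continuousOn_id.rpow_const fun x hx => Or.inl hx.1.ne'

lemma integral_kernel {α : ℝ} (hα : 0 < α) (u : ℝ) :
    ∫ r in (0:ℝ)..u, ((r ^ (α - 1) : ℝ) : ℂ) / ((Real.Gamma α : ℝ) : ℂ) =
      ((u ^ α : ℝ) : ℂ) / ((Real.Gamma (α + 1) : ℝ) : ℂ) := by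
  have h : ∫ r in (0:ℝ)..u, r ^ (α - 1) / Real.Gamma α = u ^ α / Real.Gamma (α + 1) := by
    rw [intervalIntegral.integral_div, integral_rpow (Or.inl (by linarith)),
      Real.Gamma_add_one hα.ne', sub_add_cancel, Real.zero_rpow hα.ne', sub_zero, div_div]
  have := congrArg (fun z : ℝ => (z : ℂ)) h
  simp only [← intervalIntegral.integral_ofReal] at this
  push_cast at this
  simpa using this

/-- The action of the generator on a weighted integral with `C¹` weight: formally
`A ∫₀ᵗ g(r) S(r) x dr = ∫₀ᵗ g(r) (S'(r) x - (r^{α-1}/Γ(α)) x) dr`, with `S'` integrated by parts.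
Closedness of `A` enters through its resolvent `R`. -/
lemma generator_weighted_integral {X : Type*} [NormedAddCommGroup X] [NormedSpace ℂ X]
    [CompleteSpace X] (α : ℝ) (hα : 0 < α) (D : Submodule ℂ X) (A : X →ₗ[ℂ] X)
    (S : ℝ → X →L[ℂ] X)
    (hcont : ∀ x : X, ContinuousOn (fun u : ℝ => S u x) (Set.Ici (0:ℝ)))
    (μ : ℂ) (R : X →L[ℂ] X) (hR1 : ∀ x : X, R x ∈ D)
    (hR2 : ∀ x : X, μ • R x - A (R x) = x) (hR3 : ∀ x ∈ D, R (μ • x - A x) = x)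
    (hint : ∀ u : ℝ, 0 ≤ u → ∀ x : X, (∫ s in (0:ℝ)..u, S s x) ∈ D ∧
      A (∫ s in (0:ℝ)..u, S s x) =
        S u x - (((u ^ α : ℝ) : ℂ) / ((Real.Gamma (α + 1) : ℝ) : ℂ)) • x)
    {t : ℝ} (ht : 0 < t) (g g' : ℝ → ℂ) (hg : ∀ r, HasDerivAt g (g' r) r)
    (hg' : Continuous g') (x : X) :
    (∫ r in (0:ℝ)..t, g r • S r x) ∈ D ∧
    A (∫ r in (0:ℝ)..t, g r • S r x) = g t • S t x - (∫ r in (0:ℝ)..t, g' r • S r x) -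
      (∫ r in (0:ℝ)..t, g r * (((r ^ (α - 1) : ℝ) : ℂ) / ((Real.Gamma α : ℝ) : ℂ))) • x := by
  set I : ℝ → X := fun u => ∫ s in (0:ℝ)..u, S s x with hIdef
  set K : ℝ → ℂ := fun u => ((u ^ α : ℝ) : ℂ) / ((Real.Gamma (α + 1) : ℝ) : ℂ) with hKdef
  have hSc : ContinuousOn (fun u => S u x) (Set.Icc 0 t) :=
    (hcont x).mono Set.Icc_subset_Ici_self
  have hSi : IntervalIntegrable (fun u => S u x) volume 0 t := hSc.intervalIntegrable_of_Icc ht.le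
  have hIc : ContinuousOn I (Set.Icc 0 t) := by
    have := intervalIntegral.continuousOn_primitive_interval (a := 0) (b := t) (μ := volume)
      (f := fun u => S u x) (by
        rw [Set.uIcc_of_le ht.le]
        exact (intervalIntegrable_iff_integrableOn_Icc_of_le ht.le enorm_ne_top).1 hSi)
    rwa [Set.uIcc_of_le ht.le] at this
  have hKc : ContinuousOn K (Set.Icc 0 t) := by
    apply ContinuousOn.div_const
    apply Complex.continuous_ofReal.comp_continuousOn
    exact continuousOn_id.rpow_const fun x hx => Or.inr hα.le
  have ibp := integral_smul_eq_sub_primitive ht g g' (fun u => S u x) hg hg'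
    (hSc.mono Set.Ioo_subset_Icc_self) hSi
  have ibpK : ∫ r in (0:ℝ)..t, g r * (((r ^ (α - 1) : ℝ) : ℂ) / ((Real.Gamma α : ℝ) : ℂ)) =
      g t * K t - ∫ r in (0:ℝ)..t, g' r * K r := by
    have := integral_smul_eq_sub_primitive ht g g' _ hg hg' (continuousOn_kernel α t)
      (integrable_kernel hα 0 t)
    simpa only [integral_kernel hα, smul_eq_mul] using this
  have i1 : IntervalIntegrable (fun r => g' r • I r) volume 0 t :=
    (hg'.continuousOn.smul hIc).intervalIntegrable_of_Icc ht.le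
  have i0 : IntervalIntegrable (fun r => μ • g' r • I r) volume 0 t := i1.smul μ
  have i2 : IntervalIntegrable (fun r => g' r • S r x) volume 0 t :=
    (hg'.continuousOn.smul hSc).intervalIntegrable_of_Icc ht.le
  have i3 : IntervalIntegrable (fun r => (g' r * K r) • x) volume 0 t :=
    ((hg'.continuousOn.mul hKc).smul continuousOn_const).intervalIntegrable_of_Icc ht.le
  -- `∫ g' I` lies in the domain, being a value of the resolvent.
  set w : X := μ • (∫ r in (0:ℝ)..t, g' r • I r) - ((∫ r in (0:ℝ)..t, g' r • S r x) -
    (∫ r in (0:ℝ)..t, g' r * K r) • x) with hw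
  have hRw : (∫ r in (0:ℝ)..t, g' r • I r) = R w := by
    have hw' : w = ∫ r in (0:ℝ)..t, (μ • (g' r • I r) - (g' r • S r x - (g' r * K r) • x)) := by
      rw [intervalIntegral.integral_sub i0 (i2.sub i3),
        intervalIntegral.integral_sub i2 i3, intervalIntegral.integral_smul,
        intervalIntegral.integral_smul_const]
    rw [hw', ← ContinuousLinearMap.intervalIntegral_comp_comm R (i0.sub (i2.sub i3))]
    apply intervalIntegral.integral_congr
    intro r hr
    rw [Set.uIcc_of_le ht.le] at hr
    obtain ⟨h1, h2⟩ := hint r hr.1 x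
    have h3 := hR3 _ h1
    rw [h2] at h3
    change g' r • I r = R (μ • g' r • I r - (g' r • S r x - (g' r * K r) • x))
    have h4 : μ • g' r • I r - (g' r • S r x - (g' r * K r) • x) =
        g' r • (μ • I r - (S r x - K r • x)) := by
      rw [smul_sub, smul_sub, smul_smul (g' r) (K r), smul_comm μ]
    rw [h4, map_smul, h3]
  have hAw : A (∫ r in (0:ℝ)..t, g' r • I r) = (∫ r in (0:ℝ)..t, g' r • S r x) -
      (∫ r in (0:ℝ)..t, g' r * K r) • x := by
    have h := hR2 w
    rw [← hRw] at h
    rw [hw] at h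
    exact sub_right_injective h
  obtain ⟨m1, e1⟩ := hint t ht.le x
  rw [ibp]
  refine ⟨D.sub_mem (D.smul_mem _ m1) (hRw ▸ hR1 w), ?_⟩
  rw [map_sub, map_smul, e1, hAw, ibpK]
  change g t • (S t x - K t • x) - _ = _
  module

lemma phiConst_eq {α : ℝ} (hα : 0 < α) (l : ℂ) {t : ℝ} (ht : 0 < t) :
    phiConst α l t = ∫ r in (0:ℝ)..t, (((t : ℂ) - r) * Complex.exp (-l * r)) *
      (((r ^ (α - 1) : ℝ) : ℂ) / ((Real.Gamma α : ℝ) : ℂ)) := by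
  have hc : Continuous (fun r : ℝ => Complex.exp (-l * (r : ℂ))) := by fun_prop
  have hd : ∀ r : ℝ, HasDerivAt (fun r : ℝ => (t : ℂ) - r) ((fun _ => -1) r) r := fun r => by
    simpa using (HasDerivAt.ofReal_comp (hasDerivAt_id r)).const_sub (t : ℂ)
  have := integral_smul_eq_sub_primitive ht (fun r : ℝ => (t : ℂ) - r) (fun _ => -1)
    (fun r : ℝ => Complex.exp (-l * r) * (((r ^ (α - 1) : ℝ) : ℂ) / ((Real.Gamma α : ℝ) : ℂ)))
    hd continuous_const (hc.continuousOn.mul (continuousOn_kernel α t))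
    ((integrable_kernel hα 0 t).continuousOn_mul hc.continuousOn)
  simp only [smul_eq_mul, sub_self, zero_mul, neg_one_mul, intervalIntegral.integral_neg, zero_sub,
    neg_neg] at this
  unfold phiConst
  simp only [mul_div_assoc, mul_assoc]
  exact this.symm

theorem stmt_6
    {X : Type*} [NormedAddCommGroup X] [NormedSpace ℂ X] [CompleteSpace X]
    (α : ℝ) (hα : 0 < α)
    (D : Submodule ℂ X) (A : X →ₗ[ℂ] X)
    (S : ℝ → X →L[ℂ] X)
    (hcont : ∀ x : X, ContinuousOn (fun u : ℝ => S u x) (Set.Ici (0:ℝ)))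
    (hcomm : ∀ u v : ℝ, 0 ≤ u → 0 ≤ v → ∀ x : X, S u (S v x) = S v (S u x))
    (hres : ∃ μ : ℂ, ∃ R : X →L[ℂ] X, (∀ x : X, R x ∈ D) ∧
      (∀ x : X, μ • R x - A (R x) = x) ∧ (∀ x ∈ D, R (μ • x - A x) = x))
    (hdom : ∀ u : ℝ, 0 ≤ u → ∀ x ∈ D, S u x ∈ D ∧ A (S u x) = S u (A x) ∧
      S u x = (((u ^ α : ℝ) : ℂ) / ((Real.Gamma (α + 1) : ℝ) : ℂ)) • x +
        ∫ s in (0:ℝ)..u, S s (A x))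
    (hint : ∀ u : ℝ, 0 ≤ u → ∀ x : X, (∫ s in (0:ℝ)..u, S s x) ∈ D ∧
      A (∫ s in (0:ℝ)..u, S s x) =
        S u x - (((u ^ α : ℝ) : ℂ) / ((Real.Gamma (α + 1) : ℝ) : ℂ)) • x)
    (l : ℂ) (t : ℝ)
    (ht : 0 < t) (hphi : phiConst α l t ≠ 0) (n : ℕ) (hn : 1 ≤ n)
    (hcl : IsClosed (Set.range ⇑(cSop S α l t ^ n))) :
    IsClosed ((fun y => l • y - A y)^[n] '' iterDom (D : Set X) (fun y => l • y - A y) n) := by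
  obtain ⟨μ, R, hR1, hR2, hR3⟩ := hres
  -- The weights of `D_λ(t)` and `L_λ(t)`. The iterated integral `Lop` is not used: the operator `L`
  -- below is the single weighted integral to which it reduces by Fubini.
  set g : ℝ → ℂ := fun r => Complex.exp (l * ((t - r : ℝ) : ℂ)) with hg
  set k : ℝ → ℂ := fun r => ((t : ℂ) - r) * Complex.exp (-l * r) with hk
  have hgc : Continuous g := by fun_prop
  have hkc : Continuous k := by fun_prop
  have hid : ∀ r : ℝ, HasDerivAt (fun r : ℝ => (r : ℂ)) 1 r := fun r =>
    by simpa using HasDerivAt.ofReal_comp (hasDerivAt_id r)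
  have hgd : ∀ r, HasDerivAt g (-l * g r) r := by
    intro r
    have h1 : HasDerivAt (fun r : ℝ => l * ((t - r : ℝ) : ℂ)) (-l) r := by
      simpa using ((hid r).const_sub (t : ℂ)).const_mul l
    convert h1.cexp using 1
    ring
  have hkd : ∀ r, HasDerivAt k (-l * k r - Complex.exp (-l * t) * g r) r := by
    intro r
    have h1 : HasDerivAt (fun r : ℝ => -l * (r : ℂ)) (-l) r := by
      simpa using (hid r).const_mul (-l)
    refine HasDerivAt.congr_deriv (((hid r).const_sub (t : ℂ)).mul h1.cexp) ?_
    have h2 : Complex.exp (-l * t) * g r = Complex.exp (-l * r) := by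
      change Complex.exp (-l * t) * Complex.exp (l * ((t - r : ℝ) : ℂ)) = _
      rw [← Complex.exp_add]
      push_cast
      ring_nf
    rw [h2]
    change _ = -l * (((t : ℂ) - r) * Complex.exp (-l * r)) - _
    ring
  obtain ⟨B, hB⟩ := exists_weighted_integral S hcont ht g hgc
  obtain ⟨L, hL⟩ := exists_weighted_integral S hcont ht k hkc
  have hSB : ∀ r, 0 ≤ r → Commute (S r) B := fun r hr =>
    commute_weighted_integral S hcont ht g hgc B (S r) hB fun u hu x => hcomm r u hr hu x
  have hLB : Commute L B := by
    refine commute_weighted_integral S hcont ht g hgc B L hB fun r hr x => ?_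
    have := commute_weighted_integral S hcont ht k hkc L (S r) hL
      fun u hu x => hcomm r u hr hu x
    exact congrArg (fun F : X →L[ℂ] X => F x) this.eq.symm
  have hRS : ∀ r, 0 ≤ r → ∀ x, R (S r x) = S r (R x) := by
    intro r hr x
    obtain ⟨h1, h2, -⟩ := hdom r hr (R x) (hR1 x)
    have h3 := hR3 _ h1
    rwa [h2, ← map_smul, ← map_sub, hR2] at h3
  have hRB : ∀ x, R (B x) = B (R x) := fun x =>
    congrArg (fun F : X →L[ℂ] X => F x)
      (commute_weighted_integral S hcont ht g hgc B R hB hRS).eq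
  have hAB := fun x => generator_weighted_integral α hα D A S hcont μ R hR1 hR2 hR3 hint ht g
    (fun r => -l * g r) hgd (by fun_prop) x
  have hAL := fun x => generator_weighted_integral α hα D A S hcont μ R hR1 hR2 hR3 hint ht k
    (fun r => -l * k r - Complex.exp (-l * t) * g r) hkd (by fun_prop) x
  have hSi : ∀ (f : ℝ → ℂ), Continuous f → ∀ x,
      IntervalIntegrable (fun r => f r • S r x) volume 0 t := fun f hf x =>
    (hf.continuousOn.smul ((hcont x).mono Set.Icc_subset_Ici_self)).intervalIntegrable_of_Icc ht.le
  have hc : ∫ r in (0:ℝ)..t, g r * (((r ^ (α - 1) : ℝ) : ℂ) / ((Real.Gamma α : ℝ) : ℂ)) =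
      cConst α l t := by
    simp only [cConst, hg, mul_div_assoc]
  let T : X →ₗ[ℂ] X := l • LinearMap.id - A
  have hTB : ∀ x, T (B x) = cSop S α l t x := by
    intro x
    have h1 := (hAB x).2
    simp only [mul_smul, intervalIntegral.integral_smul] at h1
    rw [hc, ← hB] at h1
    have h2 : g t = 1 := by simp [hg]
    change l • B x - A (B x) = cConst α l t • x - S t x
    rw [h1, h2]
    module
  have hTL : ∀ x, T (L x) = phiConst α l t • x - Complex.exp (-l * t) • B x := by
    intro x
    have h1 := (hAL x).2
    simp only [sub_smul, mul_smul] at h1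
    have i1 : IntervalIntegrable (fun r => -l • k r • S r x) volume 0 t := (hSi k hkc x).smul _
    have i2 : IntervalIntegrable (fun r => Complex.exp (-l * t) • g r • S r x) volume 0 t :=
      (hSi g hgc x).smul _
    rw [intervalIntegral.integral_sub i1 i2] at h1
    simp only [intervalIntegral.integral_smul] at h1
    rw [← phiConst_eq hα l ht, ← hB, ← hL] at h1
    have h2 : k t = 0 := by simp [hk]
    change l • L x - A (L x) = _
    rw [h1, h2]
    module
  have hBT : ∀ x ∈ D, B (T x) = cSop S α l t x := by
    intro x hx
    rw [← hTB]
    change B (l • x - A x) = l • B x - A (B x)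
    -- `x = R w`, and `B` commutes with `R`.
    have h1 := hR3 x hx
    have h2 := hR2 (B (μ • x - A x))
    rw [hRB, h1, map_sub, map_smul] at h2
    rw [map_sub, map_smul]
    rw [sub_right_injective h2]
  have hBV : Commute B (cSop S α l t) := by
    refine Commute.sub_right ?_ (hSB t ht.le).symm
    exact (Commute.one_right B).smul_right _
  have key := iterate_image_eq_preimage D T B L (cSop S α l t) (Complex.exp (-l * t))
    (phiConst α l t) hphi (fun x => hB x ▸ (hAB x).1) hTB hBT (fun x => hL x ▸ (hAL x).1) hTL
    hBV hLB n
  change IsClosed (T^[n] '' iterDom (D : Set X) T n)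
  rw [key]
  exact hcl.preimage (B ^ n).continuous
end
end

section
/- Let λ ∈ ℂ and t ≥ 0. If N(c_λ(t)·I − S(t)) ⊆ R^∞(c_λ(t)·I − S(t)), then N(λ − A) ⊆ R^∞(λ − A); that is, every x ∈ D(A) with (λ − A)x = 0 belongs to the range of (λ − A)^n for every n ≥ 1. -/
/-!
Write `V = D_λ(t)` and `T = c_λ(t)·I − S(t)`. The proof rests on the identity `(λ − A) V x = T x`
for all `x ∈ X` (`Dop_resolvent`), together with the commutation `T V = V T` (`cSop_Dop_comm`).

The identity comes from two integrations by parts (`integral_exp_smul_by_parts`): with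
`J(r) x = ∫₀ʳ S(s) x ds` one has `V x = J(t) x + λ ∫₀ᵗ e^{λ(t−r)} J(r) x dr`, and `A` may be applied
under the last integral because it is closed, having a bounded resolvent
(`integral_mem_and_map`). The same computation for the scalar function `r^α / Γ(α+1)` identifies
the remaining constant as `c_λ(t)` (`cConst_eq`).

By induction `T^n y = (λ − A)^n V^n y` (`range_pow_subset`), so `R^∞(T) ⊆ R^∞(λ − A)`.
If `A x = λ x`, then `A S(r) x = λ S(r) x` for all `r ≥ 0`, hence `A V x = λ V x` and
`T x = (λ − A) V x = 0`. Thus `N(λ − A) ⊆ N(T) ⊆ R^∞(T) ⊆ R^∞(λ − A)`.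
-/

open MeasureTheory intervalIntegral Pointwise

noncomputable section

/-- Integration by parts against `e^{λ(t−r)}` for a primitive `F` of `f` vanishing at `0`. The
derivative is only required in the open interval, so that `f` may be singular at `0`. -/
theorem integral_exp_smul_by_parts {Y : Type*} [NormedAddCommGroup Y] [NormedSpace ℂ Y]
    [CompleteSpace Y] (l : ℂ) {t : ℝ} (ht : 0 ≤ t) {f F : ℝ → Y}
    (hF : ContinuousOn F (Set.Icc 0 t)) (hd : ∀ r ∈ Set.Ioo 0 t, HasDerivAt F (f r) r)
    (hf : IntervalIntegrable f volume 0 t) (h0 : F 0 = 0) :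
    ∫ r in (0:ℝ)..t, Complex.exp (l * ((t - r : ℝ) : ℂ)) • f r =
      F t + l • ∫ r in (0:ℝ)..t, Complex.exp (l * ((t - r : ℝ) : ℂ)) • F r := by
  have hE : Continuous fun r : ℝ => Complex.exp (l * ((t - r : ℝ) : ℂ)) := by fun_prop
  have hdE : ∀ r : ℝ, HasDerivAt (fun r : ℝ => Complex.exp (l * ((t - r : ℝ) : ℂ)))
      (Complex.exp (l * ((t - r : ℝ) : ℂ)) * (l * (-1))) r := by
    intro r
    have h1 : HasDerivAt (fun r : ℝ => ((t - r : ℝ) : ℂ)) (-1) r := by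
      simpa using ((hasDerivAt_id r).const_sub t).ofReal_comp
    exact (h1.const_mul l).cexp
  have hi1 : IntervalIntegrable (fun r => Complex.exp (l * ((t - r : ℝ) : ℂ)) • f r)
      volume 0 t := hf.continuousOn_smul hE.continuousOn
  have hi2 : IntervalIntegrable (fun r => Complex.exp (l * ((t - r : ℝ) : ℂ)) • F r)
      volume 0 t := by
    apply ContinuousOn.intervalIntegrable
    rw [Set.uIcc_of_le ht]
    exact hE.continuousOn.smul hF
  have hi3 : IntervalIntegrable (fun r => l • (Complex.exp (l * ((t - r : ℝ) : ℂ)) • F r))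
      volume 0 t := hi2.smul l
  have key := integral_eq_sub_of_hasDerivAt_of_le ht (hE.continuousOn.smul hF)
    (f' := fun r => Complex.exp (l * ((t - r : ℝ) : ℂ)) • f r -
      l • (Complex.exp (l * ((t - r : ℝ) : ℂ)) • F r))
    (fun r hr => by
      convert (hdE r).smul (hd r hr) using 1
      rw [sub_eq_add_neg, smul_smul, ← neg_smul]
      congr 2
      ring) (hi1.sub hi3)
  rw [integral_sub hi1 hi3, intervalIntegral.integral_smul] at key
  simp only [Pi.smul_apply', sub_self, Complex.ofReal_zero, mul_zero, Complex.exp_zero, one_smul,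
    h0, smul_zero, sub_zero] at key
  exact sub_eq_iff_eq_add.mp key

/-- Hille's theorem for `A`: an operator with a bounded resolvent commutes with the integral. -/
theorem integral_mem_and_map {X : Type*} [NormedAddCommGroup X] [NormedSpace ℂ X]
    [CompleteSpace X] {D : Submodule ℂ X} {A : X →ₗ[ℂ] X}
    (hres : ∃ μ : ℂ, ∃ R : X →L[ℂ] X, (∀ x : X, R x ∈ D) ∧
      (∀ x : X, μ • R x - A (R x) = x) ∧ (∀ x ∈ D, R (μ • x - A x) = x))
    {t : ℝ} (ht : 0 ≤ t) {f g : ℝ → X}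
    (hf : ContinuousOn f (Set.Icc 0 t)) (hg : ContinuousOn g (Set.Icc 0 t))
    (hfD : ∀ r ∈ Set.Icc 0 t, f r ∈ D) (hfg : ∀ r ∈ Set.Icc 0 t, A (f r) = g r) :
    (∫ r in (0:ℝ)..t, f r) ∈ D ∧ A (∫ r in (0:ℝ)..t, f r) = ∫ r in (0:ℝ)..t, g r := by
  obtain ⟨μ, R, hRD, hR1, hR2⟩ := hres
  have hfi : IntervalIntegrable f volume 0 t := by
    apply ContinuousOn.intervalIntegrable
    rwa [Set.uIcc_of_le ht]
  have hgi : IntervalIntegrable g volume 0 t := by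
    apply ContinuousOn.intervalIntegrable
    rwa [Set.uIcc_of_le ht]
  have hμf : IntervalIntegrable (fun r => μ • f r) volume 0 t := hfi.smul μ
  -- `f = R (μ f - g)` pointwise, and the bounded operator `R` passes through the integral.
  have hR : ∫ r in (0:ℝ)..t, f r = R (∫ r in (0:ℝ)..t, (μ • f r - g r)) := by
    rw [← R.intervalIntegral_comp_comm (hμf.sub hgi)]
    apply integral_congr
    intro r hr
    rw [Set.uIcc_of_le ht] at hr
    have := hR2 (f r) (hfD r hr)
    rw [hfg r hr] at this
    exact this.symm
  refine ⟨hR ▸ hRD _, ?_⟩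
  have h1 := hR1 (∫ r in (0:ℝ)..t, (μ • f r - g r))
  rw [← hR, integral_sub hμf hgi, intervalIntegral.integral_smul] at h1
  exact sub_right_injective h1

theorem cConst_eq {α : ℝ} (hα : 0 < α) (l : ℂ) {t : ℝ} (ht : 0 ≤ t) :
    cConst α l t = ((t ^ α : ℝ) : ℂ) / ((Real.Gamma (α + 1) : ℝ) : ℂ) +
      l * ∫ r in (0:ℝ)..t, Complex.exp (l * ((t - r : ℝ) : ℂ)) *
        (((r ^ α : ℝ) : ℂ) / ((Real.Gamma (α + 1) : ℝ) : ℂ)) := by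
  have hG : Real.Gamma (α + 1) = α * Real.Gamma α := Real.Gamma_add_one hα.ne'
  have hG0 : ((Real.Gamma α : ℝ) : ℂ) ≠ 0 := by exact_mod_cast (Real.Gamma_pos_of_pos hα).ne'
  have hα0 : (α : ℂ) ≠ 0 := by exact_mod_cast hα.ne'
  have := integral_exp_smul_by_parts l ht
    (f := fun r : ℝ => ((r ^ (α - 1) : ℝ) : ℂ) / ((Real.Gamma α : ℝ) : ℂ))
    (F := fun r : ℝ => ((r ^ α : ℝ) : ℂ) / ((Real.Gamma (α + 1) : ℝ) : ℂ))
    (by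
      have : Continuous fun r : ℝ => r ^ α := Real.continuous_rpow_const hα.le
      exact (by fun_prop : Continuous _).continuousOn)
    (fun r hr => by
      have h := ((Real.hasDerivAt_rpow_const (p := α) (Or.inl hr.1.ne')).ofReal_comp).div_const
        ((Real.Gamma (α + 1) : ℝ) : ℂ)
      have e : ((r ^ (α - 1) : ℝ) : ℂ) / ((Real.Gamma α : ℝ) : ℂ) =
          ((α * r ^ (α - 1) : ℝ) : ℂ) / ((Real.Gamma (α + 1) : ℝ) : ℂ) := by
        rw [hG]
        push_cast
        field_simp
      rw [e]
      exact h)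
    (by
      have h : IntervalIntegrable (fun r : ℝ => r ^ (α - 1)) volume 0 t :=
        intervalIntegrable_rpow' (by linarith)
      have h2 : IntervalIntegrable (fun r : ℝ => ((r ^ (α - 1) : ℝ) : ℂ)) volume 0 t :=
        ⟨h.1.ofReal, h.2.ofReal⟩
      exact h2.div_const _)
    (by simp [Real.zero_rpow hα.ne'])
  simp only [smul_eq_mul] at this
  rw [← this, cConst]
  simp only [mul_div_assoc]

/-- `(λ − A) D_λ(t) = c_λ(t) − S(t)` on all of `X`. -/
theorem Dop_resolvent {X : Type*} [NormedAddCommGroup X] [NormedSpace ℂ X] [CompleteSpace X]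
    {α : ℝ} (hα : 0 < α) {D : Submodule ℂ X} {A : X →ₗ[ℂ] X} {S : ℝ → X →L[ℂ] X}
    (hcont : ∀ x : X, ContinuousOn (fun u : ℝ => S u x) (Set.Ici (0:ℝ)))
    (hres : ∃ μ : ℂ, ∃ R : X →L[ℂ] X, (∀ x : X, R x ∈ D) ∧
      (∀ x : X, μ • R x - A (R x) = x) ∧ (∀ x ∈ D, R (μ • x - A x) = x))
    (hint : ∀ u : ℝ, 0 ≤ u → ∀ x : X, (∫ s in (0:ℝ)..u, S s x) ∈ D ∧
      A (∫ s in (0:ℝ)..u, S s x) =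
        S u x - (((u ^ α : ℝ) : ℂ) / ((Real.Gamma (α + 1) : ℝ) : ℂ)) • x)
    (l : ℂ) {t : ℝ} (ht : 0 ≤ t) (x : X) :
    Dop S l t x ∈ D ∧ l • Dop S l t x - A (Dop S l t x) = cSop S α l t x := by
  have hSc : ContinuousOn (fun u : ℝ => S u x) (Set.Icc 0 t) :=
    (hcont x).mono Set.Icc_subset_Ici_self
  have hSi : IntervalIntegrable (fun u : ℝ => S u x) volume 0 t := by
    apply ContinuousOn.intervalIntegrable
    rwa [Set.uIcc_of_le ht]
  have hJc : ContinuousOn (fun r : ℝ => ∫ s in (0:ℝ)..r, S s x) (Set.Icc 0 t) := by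
    have := continuousOn_primitive_interval' hSi (Set.left_mem_uIcc)
    rwa [Set.uIcc_of_le ht] at this
  have hE : Continuous fun r : ℝ => Complex.exp (l * ((t - r : ℝ) : ℂ)) := by fun_prop
  have hw : Continuous fun r : ℝ => ((r ^ α : ℝ) : ℂ) / ((Real.Gamma (α + 1) : ℝ) : ℂ) := by
    have : Continuous fun r : ℝ => r ^ α := Real.continuous_rpow_const hα.le
    fun_prop
  have hparts : Dop S l t x = (∫ s in (0:ℝ)..t, S s x) +
      l • ∫ r in (0:ℝ)..t, Complex.exp (l * ((t - r : ℝ) : ℂ)) • ∫ s in (0:ℝ)..r, S s x := by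
    refine integral_exp_smul_by_parts l ht hJc (fun r hr => ?_) hSi integral_same
    have hO : ContinuousOn (fun u : ℝ => S u x) (Set.Ioo 0 t) := hSc.mono Set.Ioo_subset_Icc_self
    refine integral_hasDerivAt_right (hSi.mono_set ?_)
      (hO.stronglyMeasurableAtFilter isOpen_Ioo r hr) (hO.continuousAt (isOpen_Ioo.mem_nhds hr))
    rw [Set.uIcc_of_le hr.1.le, Set.uIcc_of_le ht]
    exact Set.Icc_subset_Icc_right hr.2.le
  obtain ⟨hm, hA⟩ := integral_mem_and_map hres ht
    (f := fun r => Complex.exp (l * ((t - r : ℝ) : ℂ)) • ∫ s in (0:ℝ)..r, S s x)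
    (g := fun r => Complex.exp (l * ((t - r : ℝ) : ℂ)) • S r x -
      (Complex.exp (l * ((t - r : ℝ) : ℂ)) *
        (((r ^ α : ℝ) : ℂ) / ((Real.Gamma (α + 1) : ℝ) : ℂ))) • x)
    (hE.continuousOn.smul hJc)
    ((hE.continuousOn.smul hSc).sub ((hE.mul hw).smul continuous_const).continuousOn)
    (fun r hr => D.smul_mem _ (hint r hr.1 x).1)
    (fun r hr => by rw [map_smul, (hint r hr.1 x).2, smul_sub, smul_smul])
  have hi : IntervalIntegrable (fun r : ℝ => (Complex.exp (l * ((t - r : ℝ) : ℂ)) *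
      (((r ^ α : ℝ) : ℂ) / ((Real.Gamma (α + 1) : ℝ) : ℂ))) • x) volume 0 t :=
    ((hE.mul hw).smul continuous_const).intervalIntegrable _ _
  have hA' : A (∫ r in (0:ℝ)..t,
        Complex.exp (l * ((t - r : ℝ) : ℂ)) • ∫ s in (0:ℝ)..r, S s x) =
      Dop S l t x - (∫ r in (0:ℝ)..t, Complex.exp (l * ((t - r : ℝ) : ℂ)) *
        (((r ^ α : ℝ) : ℂ) / ((Real.Gamma (α + 1) : ℝ) : ℂ))) • x := by
    rw [hA, integral_sub (hSi.continuousOn_smul hE.continuousOn) hi,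
      intervalIntegral.integral_smul_const, Dop]
  refine ⟨hparts ▸ D.add_mem (hint t ht x).1 (D.smul_mem _ hm), ?_⟩
  have hAD : A (Dop S l t x) = S t x -
      (((t ^ α : ℝ) : ℂ) / ((Real.Gamma (α + 1) : ℝ) : ℂ)) • x +
      l • (Dop S l t x - (∫ r in (0:ℝ)..t, Complex.exp (l * ((t - r : ℝ) : ℂ)) *
        (((r ^ α : ℝ) : ℂ) / ((Real.Gamma (α + 1) : ℝ) : ℂ))) • x) := by
    rw [← hA', ← (hint t ht x).2, ← map_smul, ← map_add, ← hparts]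
  rw [hAD, cSop, cConst_eq hα l ht]
  simp only [sub_apply, smul_apply, ContinuousLinearMap.id_apply]
  module

theorem cSop_Dop_comm {X : Type*} [NormedAddCommGroup X] [NormedSpace ℂ X] [CompleteSpace X]
    (α : ℝ) {S : ℝ → X →L[ℂ] X}
    (hcont : ∀ x : X, ContinuousOn (fun u : ℝ => S u x) (Set.Ici (0:ℝ)))
    (hcomm : ∀ u v : ℝ, 0 ≤ u → 0 ≤ v → ∀ x : X, S u (S v x) = S v (S u x))
    (l : ℂ) {t : ℝ} (ht : 0 ≤ t) (x : X) :
    cSop S α l t (Dop S l t x) = Dop S l t (cSop S α l t x) := by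
  have hi : IntervalIntegrable (fun r : ℝ => Complex.exp (l * ((t - r : ℝ) : ℂ)) • S r x)
      volume 0 t := by
    apply ContinuousOn.intervalIntegrable
    rw [Set.uIcc_of_le ht]
    have hE : Continuous fun r : ℝ => Complex.exp (l * ((t - r : ℝ) : ℂ)) := by fun_prop
    exact hE.continuousOn.smul ((hcont x).mono Set.Icc_subset_Ici_self)
  rw [Dop, Dop, ← (cSop S α l t).intervalIntegral_comp_comm hi]
  apply integral_congr
  intro r hr
  rw [Set.uIcc_of_le ht] at hr
  simp [cSop, hcomm t r ht hr.1 x]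

/-- If `f (V y) = T y` with `V` mapping into the domain `D` of `f` and commuting with `T`, then
`T^n y = f^n (V^n y)`; in particular `R(T^n) ⊆ R(f^n)`. -/
theorem range_pow_subset {X : Type*} {D : Set X} {f V T : X → X}
    (hD : ∀ y, V y ∈ D) (hf : ∀ y, f (V y) = T y) (hTV : ∀ y, T (V y) = V (T y)) (n : ℕ) (y : X) :
    V^[n] y ∈ iterDom D f n ∧ f^[n] (V^[n] y) = T^[n] y := by
  induction n generalizing y with
  | zero => exact ⟨Set.mem_univ _, rfl⟩
  | succ n ih =>
    have h : f (V^[n + 1] y) = V^[n] (T y) := by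
      rw [Function.iterate_succ_apply', hf]
      exact Function.Commute.iterate_right (f := T) (g := V) hTV n y
    refine ⟨⟨?_, ?_⟩, ?_⟩
    · rw [Function.iterate_succ_apply']
      exact hD _
    · rw [h]
      exact (ih (T y)).1
    · rw [Function.iterate_succ_apply f, h, (ih (T y)).2, Function.iterate_succ_apply T]

theorem stmt_8
    {X : Type*} [NormedAddCommGroup X] [NormedSpace ℂ X] [CompleteSpace X]
    (α : ℝ) (hα : 0 < α)
    (D : Submodule ℂ X) (A : X →ₗ[ℂ] X)
    (S : ℝ → X →L[ℂ] X)
    (hcont : ∀ x : X, ContinuousOn (fun u : ℝ => S u x) (Set.Ici (0:ℝ)))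
    (hcomm : ∀ u v : ℝ, 0 ≤ u → 0 ≤ v → ∀ x : X, S u (S v x) = S v (S u x))
    (hres : ∃ μ : ℂ, ∃ R : X →L[ℂ] X, (∀ x : X, R x ∈ D) ∧
      (∀ x : X, μ • R x - A (R x) = x) ∧ (∀ x ∈ D, R (μ • x - A x) = x))
    (hdom : ∀ u : ℝ, 0 ≤ u → ∀ x ∈ D, S u x ∈ D ∧ A (S u x) = S u (A x) ∧
      S u x = (((u ^ α : ℝ) : ℂ) / ((Real.Gamma (α + 1) : ℝ) : ℂ)) • x +
        ∫ s in (0:ℝ)..u, S s (A x))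
    (hint : ∀ u : ℝ, 0 ≤ u → ∀ x : X, (∫ s in (0:ℝ)..u, S s x) ∈ D ∧
      A (∫ s in (0:ℝ)..u, S s x) =
        S u x - (((u ^ α : ℝ) : ℂ) / ((Real.Gamma (α + 1) : ℝ) : ℂ)) • x)
    (l : ℂ) (t : ℝ)
    (ht : 0 ≤ t)
    (hker : ∀ x : X, cSop S α l t x = 0 →
      ∀ n : ℕ, 1 ≤ n → x ∈ Set.range ⇑(cSop S α l t ^ n)) :
    ∀ x ∈ D, l • x - A x = 0 → ∀ n : ℕ, 1 ≤ n →
      x ∈ (fun y => l • y - A y)^[n] '' iterDom (D : Set X) (fun y => l • y - A y) n := by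
  intro x hx hlx n hn
  have hV := Dop_resolvent hα hcont hres hint l ht
  have hTx : cSop S α l t x = 0 := by
    have hAx : A x = l • x := (sub_eq_zero.mp hlx).symm
    have hE : Continuous fun r : ℝ => Complex.exp (l * ((t - r : ℝ) : ℂ)) := by fun_prop
    have hc : ContinuousOn (fun r : ℝ => Complex.exp (l * ((t - r : ℝ) : ℂ)) • S r x)
        (Set.Icc 0 t) := hE.continuousOn.smul ((hcont x).mono Set.Icc_subset_Ici_self)
    have hAV := (integral_mem_and_map hres ht hc (hc.const_smul l)
      (fun r hr => D.smul_mem _ (hdom r hr.1 x hx).1)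
      (fun r hr => by
        simp only [Pi.smul_apply, map_smul, (hdom r hr.1 x hx).2.1, hAx]
        rw [smul_comm])).2
    rw [← (hV x).2, sub_eq_zero, Dop, hAV]
    exact (intervalIntegral.integral_smul _ _).symm
  obtain ⟨y, rfl⟩ := hker x hTx n hn
  have h := range_pow_subset (D := (D : Set X)) (f := fun y => l • y - A y)
    (fun z => (hV z).1) (fun z => (hV z).2) (cSop_Dop_comm α hcont hcomm l ht) n y
  refine ⟨_, h.1, h.2.trans ?_⟩
  rw [FunLike.coe_pow_eq_iterate]
end
end
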